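/- Let C be an algebraically closed field of characteristic zero, regarded as a differential field with zero derivation, and let M be a differential field extension of C (so the derivation of M vanishes on C). Let F = M(x₁,…,xₙ) be a rational function field over M in variables x₁,…,xₙ (algebraically independent over M), equipped with the unique derivation extending that of M and satisfying xᵢ′ = fᵢ for i = 1,…,n, where f₁,…,fₙ lie in the subfield C(x₁,…,xₙ) of F. If F contains a constant that does not lie in M, then there exists z ∈ C(x₁,…,xₙ) with z ∉ C such that either z′ = 0, or z′ = 1, or z′ = c·z for some nonzero c ∈ C (equivalently, Σᵢ fᵢ·∂z/∂xᵢ equals 0, 1, or c·z). -/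

import Mathlib

universe u

/-- A bundled differential field of characteristic zero: a field together with a derivation,
given as a raw function satisfying additivity and the Leibniz rule. -/
structure DFld : Type (u + 1) where
  carrier : Type u
  [fieldInst : Field carrier]
  [charZeroInst : CharZero carrier]
  deriv : carrier → carrier
  deriv_add : ∀ a b, deriv (a + b) = deriv a + deriv b
  deriv_mul : ∀ a b, deriv (a * b) = deriv a * b + a * deriv b

attribute [instance] DFld.fieldInst DFld.charZeroInst

/-- The result of applying the monic linear differential operator
`∂^n + a_{n-1} ∂^{n-1} + ⋯ + a_1 ∂ + a_0` (with coefficients `a`) to `y`,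
where the derivation is given by `D`. -/
def LApply {E : Type u} [Field E] (D : E → E) (n : ℕ) (a : Fin n → E) (y : E) : E :=
  D^[n] y + ∑ i : Fin n, a i * D^[(i : ℕ)] y

/-- `diffGen D k S` is the smallest differential subfield (w.r.t. the derivation `D`)
containing the subfield `k` and the set `S`; i.e. the differential field `k⟨S⟩`. -/
def diffGen {E : Type u} [Field E] (D : E → E) (k : Subfield E) (S : Set E) : Subfield E :=
  sInf {F : Subfield E | k ≤ F ∧ S ⊆ ↑F ∧ ∀ x ∈ F, D x ∈ F}

/-- The subfield of constants of a differential subfield `k`: `{x ∈ k | D x = 0}`. -/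
def constantsOf {E : Type u} [Field E] (D : Derivation ℤ E E) (k : Subfield E) : Subfield E where
  carrier := {x | x ∈ k ∧ D x = 0}
  zero_mem' := ⟨k.zero_mem, map_zero D⟩
  one_mem' := ⟨k.one_mem, D.map_one_eq_zero⟩
  add_mem' := by
    rintro a b ⟨hak, ha0⟩ ⟨hbk, hb0⟩
    exact ⟨k.add_mem hak hbk, by rw [map_add, ha0, hb0, add_zero]⟩
  neg_mem' := by
    rintro a ⟨hak, ha0⟩
    exact ⟨k.neg_mem hak, by rw [map_neg, ha0, neg_zero]⟩
  mul_mem' := by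
    rintro a b ⟨hak, ha0⟩ ⟨hbk, hb0⟩
    exact ⟨k.mul_mem hak hbk, by
      rw [Derivation.leibniz, ha0, hb0, smul_zero, smul_zero, add_zero]⟩
  inv_mem' := by
    rintro x ⟨hxk, hx0⟩
    refine ⟨k.inv_mem hxk, ?_⟩
    by_cases h : x = 0
    · simp [h]
    · have h1 : D (x * x⁻¹) = 0 := by rw [mul_inv_cancel₀ h, D.map_one_eq_zero]
      rw [Derivation.leibniz, hx0, smul_zero, add_zero, smul_eq_mul] at h1
      exact (mul_eq_zero.mp h1).resolve_left h

/-- `F` is a Picard–Vessiot extension of `k` (inside a common differential field) for the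
monic linear differential operator of order `n` with (lower-order) coefficients `a`:
both are differential subfields, the constants of `F` equal the constants of `k`,
the coefficients lie in `k`, and `F` is differentially generated over `k` by an
`n`-dimensional vector space (over the constants) of solutions. -/
def IsPVWith {E : Type u} [Field E] (D : E → E) (k F : Subfield E) (n : ℕ)
    (a : Fin n → E) : Prop :=
  k ≤ F ∧ (∀ x ∈ k, D x ∈ k) ∧ (∀ x ∈ F, D x ∈ F) ∧
  (∀ x ∈ F, D x = 0 → x ∈ k) ∧
  (∀ i, a i ∈ k) ∧
  ∃ y : Fin n → E,
    (∀ i, y i ∈ F) ∧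
    (∀ i, LApply D n a (y i) = 0) ∧
    (∀ c : Fin n → E, (∀ i, c i ∈ k ∧ D (c i) = 0) → (∑ i, c i * y i) = 0 → ∀ i, c i = 0) ∧
    diffGen D k (Set.range y) = F

/-- `F` is a Picard–Vessiot extension of `k` for some monic linear differential operator. -/
def IsPV {E : Type u} [Field E] (D : E → E) (k F : Subfield E) : Prop :=
  ∃ (n : ℕ) (a : Fin n → E), IsPVWith D k F n a

/-- Relative version: the differential subfield `F` is a Picard–Vessiot extension
of the differential subfield `kb ≤ F`. -/
def IsPVRel {E : Type u} [Field E] (D : E → E) (kb F : Subfield E)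
    (hF : ∀ x ∈ F, D x ∈ F) : Prop :=
  IsPV (fun x : ↥F => (⟨D ↑x, hF ↑x x.2⟩ : ↥F)) (Subfield.comap F.subtype kb) ⊤

/-- The ambient differential field (with derivation `D`) is a strongly normal extension of
its differential subfield `k`: it is finitely generated as a field extension of `k`, has no
new constants, and every differential embedding over `k` into a differential field extension
`M` lands in the compositum of the image of the base copy with the constants of `M`. -/
def IsSN {E : Type u} [Field E] (D : E → E) (k : Subfield E) : Prop :=
  (∀ x ∈ k, D x ∈ k) ∧
  (∃ s : Finset E, Subfield.closure (↑k ∪ ↑s) = (⊤ : Subfield E)) ∧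
  (∀ x : E, D x = 0 → x ∈ k) ∧
  ∀ (M : DFld.{u}) (ι σ : E →+* M.carrier),
    (∀ x, ι (D x) = M.deriv (ι x)) →
    (∀ x, σ (D x) = M.deriv (σ x)) →
    (∀ x ∈ k, σ x = ι x) →
    ∀ e : E, σ e ∈ Subfield.closure (Set.range ι ∪ {m : M.carrier | M.deriv m = 0})

/-- Relative version: the differential subfield `F` is a strongly normal extension of the
differential subfield `kb ≤ F`. -/
def IsSNRel {E : Type u} [Field E] (D : E → E) (kb F : Subfield E)
    (hF : ∀ x ∈ F, D x ∈ F) : Prop :=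
  IsSN (fun x : ↥F => (⟨D ↑x, hF ↑x x.2⟩ : ↥F)) (Subfield.comap F.subtype kb)

/-- `K` is a finite field extension of the subfield `M`. -/
def FinExt {E : Type u} [Field E] (M K : Subfield E) : Prop :=
  ∃ h : M ≤ K,
    letI : Algebra ↥M ↥K := (Subfield.inclusion h).toAlgebra
    Module.Finite ↥M ↥K

/-- The transcendence degree of the subfield `K` over the subfield `k`, as the supremum of the
cardinalities of subsets of `K` that are algebraically independent over `k`. -/
noncomputable def trdegOf {E : Type u} [Field E] (k K : Subfield E) : Cardinal.{u} :=
  ⨆ s : {s : Set E // s ⊆ (K : Set E) ∧ AlgebraicIndependent ↥k (fun x : ↥s => (x : E))},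
    Cardinal.mk ↥(s.1)

/-- `K` and `M` are free over `k`: every finite subset of `K` that is algebraically
independent over `k` remains algebraically independent over `M`. -/
def FreeOver {E : Type u} [Field E] (k K M : Subfield E) : Prop :=
  ∀ s : Finset E, (↑s : Set E) ⊆ (K : Set E) →
    AlgebraicIndependent ↥k (fun x : ↥(↑s : Set E) => (x : E)) →
    AlgebraicIndependent ↥M (fun x : ↥(↑s : Set E) => (x : E))

/-- `K` is a `k`-irreducible differential field: it is a finitely generated differential field
extension of `k` of transcendence degree at least 1, and every intermediate differential field
`k ⊂ M ⊆ K` has transcendence degree `0` or `trdeg(K|k)` over `k`. -/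
def IsIrred {E : Type u} [Field E] (D : E → E) (k K : Subfield E) : Prop :=
  (∃ s : Finset E, diffGen D k ↑s = K) ∧
  1 ≤ trdegOf k K ∧
  ∀ M : Subfield E, (∀ x ∈ M, D x ∈ M) → k < M → M ≤ K →
    trdegOf k M = 0 ∨ trdegOf k M = trdegOf k K

/-- `Kf` is a `d`-solvable extension of `k`: there is a tower of differential fields starting
at (a copy of) `k`, each step being a finite algebraic extension or a Picard–Vessiot extension
for an operator of order at most `d`, whose top contains (the copy of) `Kf`. -/
def IsDSolvable {E : Type u} [Field E] (D : E → E) (k Kf : Subfield E) (d : ℕ) : Prop :=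
  ∃ (Ω : DFld.{u}) (j : E →+* Ω.carrier),
    (∀ x, j (D x) = Ω.deriv (j x)) ∧
    ∃ (r : ℕ) (T : Fin (r + 1) → Subfield Ω.carrier),
      T 0 = Subfield.map j k ∧
      Subfield.map j Kf ≤ T (Fin.last r) ∧
      (∀ i, ∀ x ∈ T i, Ω.deriv x ∈ T i) ∧
      ∀ i : Fin r,
        FinExt (T i.castSucc) (T i.succ) ∨
        ∃ n ≤ d, ∃ a : Fin n → Ω.carrier, IsPVWith Ω.deriv (T i.castSucc) (T i.succ) n a

/-- `Kn` is generated over `kb`, as a differential field with the same constants, by one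
solution `z` of an inhomogeneous equation `L(y) = b` (with `L` monic over `kb` of order
`n ≤ d` and `b ∈ kb`) together with an `n`-dimensional space (over the constants) of
solutions of `L(y) = 0`. -/
def IsPVInhomLe {E : Type u} [Field E] (D : E → E) (kb Kn : Subfield E) (d : ℕ) : Prop :=
  kb ≤ Kn ∧ (∀ x ∈ kb, D x ∈ kb) ∧ (∀ x ∈ Kn, D x ∈ Kn) ∧
  (∀ x ∈ Kn, D x = 0 → x ∈ kb) ∧
  ∃ n, n ≤ d ∧ ∃ (a : Fin n → E) (b z : E) (y : Fin n → E),
    (∀ i, a i ∈ kb) ∧ b ∈ kb ∧ z ∈ Kn ∧ (∀ i, y i ∈ Kn) ∧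
    LApply D n a z = b ∧
    (∀ i, LApply D n a (y i) = 0) ∧
    (∀ c : Fin n → E, (∀ i, c i ∈ kb ∧ D (c i) = 0) → (∑ i, c i * y i) = 0 → ∀ i, c i = 0) ∧
    diffGen D kb (insert z (Set.range y)) = Kn

/-- `Kf` is a `d⁺`-solvable extension of `k`. -/
def IsDPlusSolvable {E : Type u} [Field E] (D : E → E) (k Kf : Subfield E) (d : ℕ) : Prop :=
  ∃ (Ω : DFld.{u}) (j : E →+* Ω.carrier),
    (∀ x, j (D x) = Ω.deriv (j x)) ∧
    ∃ (r : ℕ) (T : Fin (r + 1) → Subfield Ω.carrier),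
      T 0 = Subfield.map j k ∧
      Subfield.map j Kf ≤ T (Fin.last r) ∧
      (∀ i, ∀ x ∈ T i, Ω.deriv x ∈ T i) ∧
      ∀ i : Fin r,
        FinExt (T i.castSucc) (T i.succ) ∨ IsPVInhomLe Ω.deriv (T i.castSucc) (T i.succ) d

/-- `TSet D kb K` is the set of elements of `K` annihilated by some monic linear differential
operator with coefficients in `kb`. -/
def TSet {E : Type u} [Field E] (D : E → E) (kb K : Subfield E) : Set E :=
  {x | x ∈ K ∧ ∃ (n : ℕ) (a : Fin n → E), (∀ i, a i ∈ kb) ∧ LApply D n a x = 0}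

/-!
Write `K = C(x)`. If `K` contains a constant outside `C`, that constant is the required element.
Otherwise let `v` be the derivation of `F` that agrees with `D` on `K` and vanishes on `M`, and let
`E = ker D`. Then `ker v = M`, the derivations `D`, `v` and `δ = v - D` commute, and both `M` and
`E` are linearly disjoint from `K` over `C`, because elements of `K` independent over the constants
of `K` stay independent over the constants of `F`. Hence, if `L` equals `E` or lies between `C` and
`M`, the ring `L · K` is a localization of a polynomial ring, and in particular factorial.

The elementary solution comes from a finite-dimensional `M`-subspace `W` of `F` that is stable
under `y ↦ v y - κ y` for some `κ` and contains two elements with nonzero Wronskian. Specializing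
the finitely many elements of `M` involved to `C` (Nullstellensatz) turns `W` into a
finite-dimensional `C`-subspace of `K` of dimension at least two. There, an eigenvector `r` and an
eigenvector `s` modulo `r` have a quotient `z = s / r` with `z' = a z + b` for some `a, b ∈ C`.

To find `W`, let `w` be a constant outside `M` and write `w = p / q` in lowest terms in `N · K`
with `N = M ∩ E(K)`; then `D p = μ p` and `D q = μ q` for some `μ ∈ N · K`. In `E · K` every prime
dividing its image under `D` also divides its image under `v`, which forces `v q / q ∈ E · K`.
Consequently `v μ = D (v q / q)` lies in both `M · K` and `E · K`.
* If `δ (v μ) = 0`, then `δ μ ∈ M`, and the iterates of `p` and `q` under `δ` span `W`, with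
  `κ = μ`.
* Otherwise expand `v μ = ∑ eᵢ kᵢ` with `eᵢ ∈ E` and `kᵢ ∈ K`; now `1` and the iterates of the `eᵢ`
  under `v` span `W`, with `κ = 0`.
-/

section ConstantField

variable {C F : Type*} [Field C] [Field F] [Algebra C F]

/-- The constants of the differential field `(F, d)`, as an intermediate field of `F / C`. -/
def constantField (d : Derivation C F F) : IntermediateField C F where
  carrier := {y | d y = 0}
  mul_mem' {a b} (ha : d a = 0) (hb : d b = 0) := by simp [ha, hb]
  add_mem' {a b} (ha : d a = 0) (hb : d b = 0) := by simp [ha, hb]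
  algebraMap_mem' c := d.map_algebraMap c
  inv_mem' a (ha : d a = 0) := by simp [Derivation.leibniz_inv, ha]

theorem mem_constantField {d : Derivation C F F} {y : F} : y ∈ constantField d ↔ d y = 0 :=
  Iff.rfl

theorem apply_mem_of_mem_constantField {d : Derivation C F F} {L : IntermediateField C F} {y : F}
    (hy : y ∈ constantField d) : d y ∈ L :=
  mem_constantField.1 hy ▸ zero_mem L

theorem derivation_constantField_smul (d : Derivation C F F) (e : constantField d) (y : F) :
    d (e • y) = e • d y := by
  simp [IntermediateField.smul_def, mem_constantField.1 e.2]

section LinearIndependence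

variable {d : Derivation C F F} {L : IntermediateField C F} {k : Type*} [Field k] [Algebra k F]

/-- The derivation `d` as a linear map over its field of constants. -/
def constantLinearMap (d : Derivation C F F) : F →ₗ[constantField d] F where
  toFun := d
  map_add' := map_add d
  map_smul' := derivation_constantField_smul d

theorem linearIndependent_mul_left {ι : Type*} {b : ι → F} (hb : LinearIndependent k b) {a : F}
    (ha : a ≠ 0) : LinearIndependent k fun i ↦ a * b i :=
  hb.map' (LinearMap.mulLeft k a) (LinearMap.ker_eq_bot.2 (mul_right_injective₀ ha))

theorem linearIndependent_derivation_succ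
    (hk : Set.range (algebraMap k F) = {y | y ∈ L ∧ d y = 0}) {n : ℕ} {b : Fin (n + 1) → F}
    (hbL : ∀ i, b i ∈ L) (hb : LinearIndependent k b) (hb0 : b 0 = 1) :
    LinearIndependent k fun i : Fin n ↦ d (b i.succ) := by
  have hmem (c : k) : algebraMap k F c ∈ L ∧ d (algebraMap k F c) = 0 :=
    hk.subset (Set.mem_range_self c)
  rw [Fintype.linearIndependent_iff] at hb ⊢
  intro c hc
  have hconst : d (∑ i, c i • b i.succ) = 0 := by
    simpa [Algebra.smul_def, (hmem _).2] using hc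
  have hL : ∑ i, c i • b i.succ ∈ L :=
    sum_mem fun i _ ↦ by simpa only [Algebra.smul_def] using mul_mem (hmem _).1 (hbL _)
  obtain ⟨c₀, hc₀⟩ := hk.superset ⟨hL, hconst⟩
  have hrel : ∑ i, Fin.cons (α := fun _ ↦ k) (-c₀) c i • b i = 0 := by
    simp only [Fin.sum_univ_succ, Fin.cons_zero, Fin.cons_succ, hb0, ← hc₀, Algebra.smul_def (-c₀),
      map_neg, mul_one, neg_add_cancel]
  exact fun i ↦ hb _ hrel i.succ

theorem linearIndependent_constantField_fin (hd : ∀ y ∈ L, d y ∈ L)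
    (hk : Set.range (algebraMap k F) = {y | y ∈ L ∧ d y = 0}) {n : ℕ} {b : Fin n → F}
    (hbL : ∀ i, b i ∈ L) (hb : LinearIndependent k b) :
    LinearIndependent (constantField d) b := by
  induction n with
  | zero => exact linearIndependent_empty_type
  | succ n ih =>
    have hb0 : b 0 ≠ 0 := hb.ne_zero 0
    set b' : Fin (n + 1) → F := fun i ↦ (b 0)⁻¹ * b i
    have hb'0 : b' 0 = 1 := inv_mul_cancel₀ hb0
    have hb'L (i) : b' i ∈ L := mul_mem (inv_mem (hbL 0)) (hbL i)
    have hderiv : LinearIndependent (constantField d) fun i : Fin n ↦ d (b' i.succ) :=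
      ih (fun i ↦ hd _ (hb'L _)) (linearIndependent_derivation_succ hk hb'L
        (linearIndependent_mul_left hb (inv_ne_zero hb0)) hb'0)
    suffices h : LinearIndependent (constantField d) b' by
      simpa [b', mul_inv_cancel_left₀ hb0] using linearIndependent_mul_left h hb0
    rw [Fintype.linearIndependent_iff] at hderiv ⊢
    intro c hc
    have htail : ∀ i : Fin n, c i.succ = 0 := hderiv _ <| by
      simpa [Fin.sum_univ_succ, hb'0, map_sum, derivation_constantField_smul] using congrArg d hc
    have hhead : c 0 • (1 : F) = 0 := by
      simpa only [Fin.sum_univ_succ, hb'0, htail, zero_smul, Finset.sum_const_zero, add_zero]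
        using hc
    exact Fin.cases (Subtype.ext (by simpa [IntermediateField.smul_def] using hhead)) htail

theorem linearIndependent_constantField (hd : ∀ y ∈ L, d y ∈ L)
    (hk : Set.range (algebraMap k F) = {y | y ∈ L ∧ d y = 0}) {ι : Type*} {b : ι → F}
    (hbL : ∀ i, b i ∈ L) (hb : LinearIndependent k b) :
    LinearIndependent (constantField d) b := by
  rw [linearIndependent_iff_finset_linearIndependent] at hb ⊢
  intro s
  rw [← linearIndependent_equiv s.equivFin.symm]
  exact linearIndependent_constantField_fin hd hk (fun i ↦ hbL _)
    ((linearIndependent_equiv s.equivFin.symm).2 (hb s))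

end LinearIndependence

theorem linearDisjoint_constantField {d : Derivation C F F} {K : IntermediateField C F}
    (hd : ∀ y ∈ K, d y ∈ K) (hK : K ⊓ constantField d = ⊥) :
    (constantField d).LinearDisjoint K := by
  have hC : Set.range (algebraMap C F) = {y | y ∈ K ∧ d y = 0} := by
    rw [← IntermediateField.coe_bot, ← hK]; rfl
  let b := Module.Basis.ofVectorSpace C K
  refine .of_basis_right' b (linearIndependent_constantField hd hC (fun i ↦ (b i).2) ?_)
  exact b.linearIndependent.map' K.val.toLinearMap (LinearMap.ker_eq_bot.2 K.val.injective)

end ConstantField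

section Compositum

variable {C F : Type*} [Field C] [Field F] [Algebra C F] {L K : IntermediateField C F}

/-- The ring compositum `L · K` of two intermediate fields: the subring of `F` they generate,
which consists of the finite sums `∑ lᵢ kᵢ`. -/
abbrev ringCompositum (L K : IntermediateField C F) : Subalgebra C F :=
  L.toSubalgebra ⊔ K.toSubalgebra

theorem left_mem_ringCompositum {y : F} (hy : y ∈ L) : y ∈ ringCompositum L K :=
  (le_sup_left : L.toSubalgebra ≤ _) hy

theorem right_mem_ringCompositum {y : F} (hy : y ∈ K) : y ∈ ringCompositum L K :=
  (le_sup_right : K.toSubalgebra ≤ _) hy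

@[elab_as_elim]
theorem ringCompositum_induction {p : F → Prop} (mul : ∀ l ∈ L, ∀ k ∈ K, p (l * k))
    (add : ∀ y z, p y → p z → p (y + z)) {y : F} (hy : y ∈ ringCompositum L K) : p y := by
  rw [← Subalgebra.mem_toSubmodule, ← Subalgebra.mul_toSubmodule] at hy
  exact Submodule.mul_induction_on hy mul add

theorem mem_ringCompositum_iff_mem_span {ι : Type*} (b : Module.Basis ι C K) {y : F} :
    y ∈ ringCompositum L K ↔ y ∈ Submodule.span L (Set.range (K.val ∘ b)) := by
  refine ⟨fun hy ↦ ?_, fun hy ↦ ?_⟩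
  · refine ringCompositum_induction (fun l hl k hk ↦ ?_) (fun _ _ ↦ add_mem) hy
    refine Submodule.smul_mem _ (⟨l, hl⟩ : L) (Submodule.span_subset_span C _ _ ?_)
    rw [Set.range_comp, SetLike.mem_coe]
    exact Submodule.apply_mem_span_image_of_mem_span K.val.toLinearMap (b.mem_span ⟨k, hk⟩)
  · refine Submodule.span_induction ?_ (zero_mem _) (fun _ _ _ _ ↦ add_mem) (fun l _ _ ↦ ?_) hy
    · rintro _ ⟨i, rfl⟩
      exact right_mem_ringCompositum (b i).2
    · exact mul_mem (left_mem_ringCompositum l.2)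

theorem exists_linearCombination_of_mem_ringCompositum {ι : Type*} (b : Module.Basis ι C K) {y : F}
    (hy : y ∈ ringCompositum L K) :
    ∃ l : ι →₀ L, Finsupp.linearCombination L (K.val ∘ b) l = y := by
  rwa [mem_ringCompositum_iff_mem_span b, ← Finsupp.range_linearCombination] at hy

theorem exists_sum_mul_eq_of_mem_ringCompositum {y : F} (hy : y ∈ ringCompositum L K) :
    ∃ (n : ℕ) (a : Fin n → L) (b : Fin n → K), LinearIndependent C b ∧
      ∑ i, (a i * b i : F) = y := by
  let β := Module.Basis.ofVectorSpace C K
  obtain ⟨l, rfl⟩ := exists_linearCombination_of_mem_ringCompositum β hy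
  let e := l.support.equivFin
  refine ⟨_, fun i ↦ l (e.symm i), fun i ↦ β (e.symm i),
    β.linearIndependent.comp _ (Subtype.val_injective.comp e.symm.injective), ?_⟩
  rw [e.symm.sum_comp fun i : l.support ↦ (l i * β i : F),
    Finset.sum_coe_sort l.support fun i ↦ (l i * β i : F)]
  rfl

theorem exists_div_of_mem_sup {y : F} (hy : y ∈ L ⊔ K) :
    ∃ a ∈ ringCompositum L K, ∃ b ∈ ringCompositum L K, y = a / b := by
  rwa [IntermediateField.sup_def, IntermediateField.mem_adjoin_iff_div] at hy

theorem apply_mem_ringCompositum {d : Derivation C F F} (hL : ∀ y ∈ L, d y ∈ L)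
    (hK : ∀ y ∈ K, d y ∈ K) {y : F} (hy : y ∈ ringCompositum L K) : d y ∈ ringCompositum L K := by
  refine ringCompositum_induction (fun l hl k hk ↦ ?_) (fun y z hy hz ↦ ?_) hy
  · rw [d.leibniz]
    exact add_mem (mul_mem (left_mem_ringCompositum hl) (right_mem_ringCompositum (hK k hk)))
      (mul_mem (right_mem_ringCompositum hk) (left_mem_ringCompositum (hL l hl)))
  · exact map_add d y z ▸ add_mem hy hz

theorem apply_mem_sup {d : Derivation C F F} (hL : ∀ y ∈ L, d y ∈ L) (hK : ∀ y ∈ K, d y ∈ K)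
    {y : F} (hy : y ∈ L ⊔ K) : d y ∈ L ⊔ K := by
  have hle {z} (hz : z ∈ ringCompositum L K) : z ∈ L ⊔ K :=
    L.le_sup_toSubalgebra K hz
  have hd {z} (hz : z ∈ ringCompositum L K) : d z ∈ L ⊔ K :=
    hle (apply_mem_ringCompositum hL hK hz)
  obtain ⟨a, ha, b, hb, rfl⟩ := exists_div_of_mem_sup hy
  rw [Derivation.leibniz_div]
  exact mul_mem (pow_mem (inv_mem (hle hb)) 2)
    (sub_mem (mul_mem (hle hb) (hd ha)) (mul_mem (hle ha) (hd hb)))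

theorem linearCombination_mapRange_inclusion {E : IntermediateField C F} (h : L ≤ E) {ι : Type*}
    (b : ι → F) (l : ι →₀ L) :
    Finsupp.linearCombination E b (l.mapRange (IntermediateField.inclusion h) (map_zero _)) =
      Finsupp.linearCombination L b l := by
  simp only [Finsupp.linearCombination_apply]
  exact Finsupp.sum_mapRange_index fun i ↦ zero_smul E (b i)

theorem constantField_eq_left {v : Derivation C F F} (hL : L ≤ constantField v)
    (hK : (constantField v).LinearDisjoint K) (hLK : L ⊔ K = ⊤) :
    constantField v = L := by
  refine le_antisymm (fun y hy ↦ ?_) hL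
  obtain ⟨a, ha, b, hb, rfl⟩ := exists_div_of_mem_sup (by simp [hLK] : y ∈ L ⊔ K)
  obtain rfl | hb0 := eq_or_ne b 0
  · simp
  let β := Module.Basis.ofVectorSpace C K
  obtain ⟨l, hl⟩ := exists_linearCombination_of_mem_ringCompositum β ha
  obtain ⟨m, hm⟩ := exists_linearCombination_of_mem_ringCompositum β hb
  have hβ : LinearIndependent (constantField v) (K.val ∘ β) :=
    hK.linearIndependent_right β.linearIndependent
  have hcoeff : l.mapRange (IntermediateField.inclusion hL) (map_zero _) =
      (⟨a / b, hy⟩ : constantField v) • m.mapRange (IntermediateField.inclusion hL) (map_zero _) :=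
    hβ.finsuppLinearCombination_injective <| by
      rw [map_smul, linearCombination_mapRange_inclusion, linearCombination_mapRange_inclusion, hl,
        hm, IntermediateField.smul_def, smul_eq_mul, div_mul_cancel₀ _ hb0]
  obtain ⟨i, hi⟩ : ∃ i, m i ≠ 0 := by
    by_contra! h
    exact hb0 (by rw [← hm, (Finsupp.ext h : m = 0), map_zero])
  have hli : (l i : F) = a / b * m i := congrArg Subtype.val (DFunLike.congr_fun hcoeff i)
  have hmi : (m i : F) ≠ 0 := by simpa using hi
  have hab : a / b = l i / m i := eq_div_of_mul_eq hmi hli.symm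
  exact hab ▸ div_mem (l i).2 (m i).2

theorem mem_span_range_mul_iff {k ι : Type*} [Field k] [Algebra k F] {b : ι → F} {y a : F} :
    a ∈ Submodule.span k (Set.range fun i ↦ y * b i) ↔
      ∃ z ∈ Submodule.span k (Set.range b), y * z = a := by
  have hmap := Submodule.map_span (LinearMap.mulLeft k y) (Set.range b)
  rw [← Set.range_comp] at hmap
  exact (SetLike.ext_iff.1 hmap a).symm

theorem exists_div_mem_ringCompositum_inf {v : Derivation C F F} {E : IntermediateField C F}
    (hK : (constantField v ⊓ E).LinearDisjoint K) (hvK : constantField v ⊔ K = ⊤)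
    (hE : ∀ y ∈ E, v y ∈ E) (hKE : K ≤ E) {y : F} (hy : y ∈ E) :
    ∃ a ∈ ringCompositum (constantField v ⊓ E) K,
      ∃ b ∈ ringCompositum (constantField v ⊓ E) K, y = a / b := by
  obtain rfl | hy0 := eq_or_ne y 0
  · exact ⟨0, zero_mem _, 0, zero_mem _, by simp⟩
  by_contra! hnot
  let N := constantField v ⊓ E
  let β := Module.Basis.ofVectorSpace C K
  have hβN : LinearIndependent N (K.val ∘ β) :=
    hK.linearIndependent_right β.linearIndependent
  have hsumN : LinearIndependent N (Sum.elim (K.val ∘ β) fun i ↦ y * (K.val ∘ β) i) := by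
    refine hβN.sum_type (linearIndependent_mul_left hβN hy0) (Submodule.disjoint_def.2 ?_)
    intro a ha hyb
    obtain ⟨b, hb, rfl⟩ := mem_span_range_mul_iff.1 hyb
    rw [← mem_ringCompositum_iff_mem_span β] at ha hb
    by_contra hyb0
    exact hnot _ ha _ hb (eq_div_of_mul_eq (right_ne_zero_of_mul hyb0) rfl)
  have hsum : LinearIndependent (constantField v)
      (Sum.elim (K.val ∘ β) fun i ↦ y * (K.val ∘ β) i) := by
    refine linearIndependent_constantField hE ?_ ?_ hsumN
    · ext z
      simp [N, mem_constantField, and_comm]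
    · rintro (i | i)
      exacts [hKE (β i).2, mul_mem hy (hKE (β i).2)]
  obtain ⟨a, ha, b, hb, rfl⟩ := exists_div_of_mem_sup (by simp [hvK] : y ∈ constantField v ⊔ K)
  have hb0 : b ≠ 0 := fun h ↦ hy0 (by simp [h])
  rw [mem_ringCompositum_iff_mem_span β] at ha hb
  have ha0 : a = 0 := Submodule.disjoint_def.1 (linearIndependent_sum.1 hsum).2.2 a ha
    (mem_span_range_mul_iff.2 ⟨b, hb, div_mul_cancel₀ a hb0⟩)
  simp [ha0] at hy0

end Compositum

section TriangularPair

theorem exists_triangular_pair {C V : Type*} [Field C] [IsAlgClosed C] [AddCommGroup V] [Module C V]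
    [FiniteDimensional C V] (T : Module.End C V) (hV : 2 ≤ Module.finrank C V) :
    ∃ p q : V, ∃ a b c : C, LinearIndependent C ![p, q] ∧ T p = a • p ∧ T q = b • q + c • p := by
  have : Nontrivial V := Module.nontrivial_of_finrank_pos (R := C) (by lia)
  obtain ⟨a, ha⟩ := Module.End.exists_eigenvalue T
  obtain ⟨p, hp⟩ := ha.exists_hasEigenvector
  let P : Submodule C V := C ∙ p
  have hP : P ≤ P.comap T := (Submodule.span_singleton_le_iff_mem _ _).2 <|
    Submodule.mem_span_singleton.2 ⟨a, hp.apply_eq_smul.symm⟩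
  have hPtop : P ≠ ⊤ := fun h ↦ by
    rw [← finrank_top C V, ← h, finrank_span_singleton hp.2] at hV
    lia
  have : Nontrivial (V ⧸ P) := Submodule.Quotient.nontrivial_iff.2 hPtop
  obtain ⟨b, hb⟩ := Module.End.exists_eigenvalue (P.mapQ P T hP)
  obtain ⟨q', hq'⟩ := hb.exists_hasEigenvector
  obtain ⟨q, rfl⟩ := Submodule.Quotient.mk_surjective P q'
  have hTq : T q - b • q ∈ P := (Submodule.Quotient.eq P).1 hq'.apply_eq_smul
  obtain ⟨c, hc⟩ := Submodule.mem_span_singleton.1 hTq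
  have hq : ∀ r : C, r • p ≠ q := fun r hr ↦
    hq'.2 ((Submodule.Quotient.mk_eq_zero P).2 (Submodule.mem_span_singleton.2 ⟨r, hr⟩))
  exact ⟨p, q, a, b, c, (LinearIndependent.pair_iff' hp.2).2 hq, hp.apply_eq_smul,
    by rw [hc, add_sub_cancel]⟩

variable {C F : Type*} [Field C] [Field F] [Algebra C F]

/-- The field `K` contains an element `z ∉ C` satisfying one of the elementary differential
equations `z' = 0`, `z' = 1` or `z' = c z` with `0 ≠ c ∈ C`. -/
def HasElementarySolution (d : Derivation C F F) (K : IntermediateField C F) : Prop :=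
  ∃ z ∈ K, z ∉ (⊥ : IntermediateField C F) ∧ (d z = 0 ∨ d z = 1 ∨ ∃ c : C, c ≠ 0 ∧ d z = c • z)

variable {d : Derivation C F F} {K : IntermediateField C F}

theorem hasElementarySolution_of_affine {z : F} (hzK : z ∈ K)
    (hz : z ∉ (⊥ : IntermediateField C F)) {a b : C} (hdz : d z = a • z + algebraMap C F b) :
    HasElementarySolution d K := by
  obtain rfl | ha := eq_or_ne a 0
  · obtain rfl | hb := eq_or_ne b 0
    · exact ⟨z, hzK, hz, .inl (by simpa using hdz)⟩
    · refine ⟨b⁻¹ • z, K.smul_mem hzK, fun h ↦ hz ?_, .inr (.inl ?_)⟩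
      · simpa [hb] using IntermediateField.smul_mem _ h (x := b)
      · rw [d.map_smul, hdz, zero_smul, zero_add, Algebra.algebraMap_eq_smul_one, smul_smul,
          inv_mul_cancel₀ hb, one_smul]
  · refine ⟨z + algebraMap C F (a⁻¹ * b), add_mem hzK (K.algebraMap_mem _), fun h ↦ hz ?_,
      .inr (.inr ⟨a, ha, ?_⟩)⟩
    · simpa using sub_mem h (IntermediateField.algebraMap_mem _ (a⁻¹ * b))
    · rw [map_add, d.map_algebraMap, hdz, add_zero, smul_add, Algebra.algebraMap_eq_smul_one b,
        Algebra.algebraMap_eq_smul_one (a⁻¹ * b), smul_smul, mul_inv_cancel_left₀ ha]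

theorem hasElementarySolution_of_invariant_submodule [IsAlgClosed C] (κ : F) {W : Submodule C F}
    [FiniteDimensional C W] (hWK : ∀ y ∈ W, y ∈ K) (hW : ∀ y ∈ W, d y - κ * y ∈ W) {p q : F}
    (hp : p ∈ W) (hq : q ∈ W) (hpq : p * d q - q * d p ≠ 0) : HasElementarySolution d K := by
  let T : Module.End C W := ((d : F →ₗ[C] F) - LinearMap.mulLeft C κ).restrict hW
  have hfinrank : 2 ≤ Module.finrank C W := by
    have hind : LinearIndependent C ![(⟨p, hp⟩ : W), ⟨q, hq⟩] := by
      refine (LinearIndependent.pair_iff' fun h ↦ hpq ?_).2 fun c hc ↦ hpq ?_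
      · obtain rfl : p = 0 := congrArg Subtype.val h
        simp
      · obtain rfl : c • p = q := congrArg Subtype.val hc
        simp
    simpa using hind.fintype_card_le_finrank
  obtain ⟨r, s, a, b, c, hrs, hr, hs⟩ := exists_triangular_pair T hfinrank
  have hdr : d r - κ * r = a • (r : F) := congrArg Subtype.val hr
  have hds : d s - κ * s = b • (s : F) + c • (r : F) := congrArg Subtype.val hs
  have hr0 : (r : F) ≠ 0 := by simpa using hrs.ne_zero 0
  refine hasElementarySolution_of_affine (z := s / r) (a := b - a) (b := c)
    (div_mem (hWK _ s.2) (hWK _ r.2)) ?_ ?_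
  · rintro ⟨e, he⟩
    refine (LinearIndependent.pair_iff' (hrs.ne_zero 0)).1 hrs e (Subtype.ext ?_)
    exact (Algebra.smul_def e (r : F)).trans ((eq_div_iff hr0).1 he)
  · simp only [Derivation.leibniz_div, sub_eq_iff_eq_add.1 hdr, sub_eq_iff_eq_add.1 hds,
      smul_eq_mul]
    simp only [Algebra.smul_def, map_sub]
    field

end TriangularPair

section Specialization

open scoped TensorProduct

variable {C : Type*} [Field C]

theorem exists_algHom_apply_ne_zero {A : Type*} [CommRing A] [IsReduced A] [Algebra C A]
    [IsAlgClosed C] [Algebra.FiniteType C A] {s : A} (hs : s ≠ 0) : ∃ φ : A →ₐ[C] C, φ s ≠ 0 := by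
  have hA : IsJacobsonRing A := isJacobsonRing_of_finiteType (A := C)
  have hjac : s ∉ (⊥ : Ideal A).jacobson := by
    rwa [hA.out Ideal.isRadical_bot, Ideal.mem_bot]
  obtain ⟨m, hm, hsm⟩ : ∃ m : Ideal A, m.IsMaximal ∧ s ∉ m := by
    simpa [Ideal.jacobson, Submodule.mem_sInf] using hjac
  let := Ideal.Quotient.field m
  have : Module.Finite C (A ⧸ m) := finite_of_finite_type_of_isJacobsonRing C (A ⧸ m)
  let ψ : (A ⧸ m) →ₐ[C] C := IsAlgClosed.lift
  exact ⟨ψ.comp (Ideal.Quotient.mkₐ C m), by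
    simpa [Ideal.Quotient.eq_zero_iff_mem] using hsm⟩

/-- The specialization `A ⊗ B → B` of scalars along a homomorphism `φ : A → C`. -/
noncomputable def specialize {A B : Type*} [CommRing A] [Algebra C A] [CommRing B] [Algebra C B]
    (φ : A →ₐ[C] C) : A ⊗[C] B →ₐ[C] B :=
  (Algebra.TensorProduct.lid C B).toAlgHom.comp (Algebra.TensorProduct.map φ (AlgHom.id C B))

theorem specialize_tmul {A B : Type*} [CommRing A] [Algebra C A] [CommRing B] [Algebra C B]
    (φ : A →ₐ[C] C) (a : A) (y : B) : specialize φ (a ⊗ₜ y) = φ a • y := by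
  simp [specialize]

theorem specialize_smul {A B : Type*} [CommRing A] [Algebra C A] [CommRing B] [Algebra C B]
    (φ : A →ₐ[C] C) (a : A) (t : A ⊗[C] B) : specialize φ (a • t) = φ a • specialize φ t := by
  rw [Algebra.smul_def, map_mul, Algebra.TensorProduct.algebraMap_apply, specialize_tmul,
    Algebra.algebraMap_self_apply, smul_mul_assoc, one_mul]

theorem exists_specialize_ne_zero {A B : Type*} [CommRing A] [IsReduced A] [Algebra C A]
    [IsAlgClosed C] [Algebra.FiniteType C A] [CommRing B] [Algebra C B] {t : A ⊗[C] B}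
    (ht : t ≠ 0) : ∃ φ : A →ₐ[C] C, specialize φ t ≠ 0 := by
  let b := Module.Basis.ofVectorSpace C B
  obtain ⟨i, hi⟩ : ∃ i, (b.baseChange A).repr t i ≠ 0 := by
    by_contra! h
    exact ht ((b.baseChange A).repr.map_eq_zero_iff.1 (Finsupp.ext h))
  obtain ⟨φ, hφ⟩ := exists_algHom_apply_ne_zero (C := C) hi
  have hcoord (u : A ⊗[C] B) : φ ((b.baseChange A).repr u i) = b.repr (specialize φ u) i := by
    induction u with
    | zero => simp
    | tmul a y => simp [specialize_tmul, mul_comm]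
    | add u w hu hw => simp [hu, hw]
  exact ⟨φ, fun h ↦ hφ (by simp [hcoord, h])⟩

end Specialization

section RestrictDerivation

variable {C F : Type*} [CommRing C] [CommRing F] [Algebra C F]

/-- The restriction of a derivation to a subalgebra that it maps to itself. -/
def restrictDerivation (d : Derivation C F F) (S : Subalgebra C F) (hS : ∀ y ∈ S, d y ∈ S) :
    Derivation C S S :=
  .mk' ((d : F →ₗ[C] F).restrict (p := S.toSubmodule) (q := S.toSubmodule) hS) fun y z ↦
    Subtype.ext (d.leibniz y z)

theorem coe_restrictDerivation (d : Derivation C F F) {S : Subalgebra C F}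
    (hS : ∀ y ∈ S, d y ∈ S) (y : S) : (restrictDerivation d S hS y : F) = d y :=
  rfl

end RestrictDerivation

section InvariantSubspaces

open scoped TensorProduct

variable {C F : Type*} [Field C] [Field F] [Algebra C F] {d : Derivation C F F}
  {M K : IntermediateField C F}

theorem hasElementarySolution_of_linearSystem [IsAlgClosed C] {ι : Type*} [Fintype ι] {w : ι → F}
    (hwK : ∀ i, w i ∈ K) (κ : F) (c : ι → ι → C)
    (hw : ∀ i, d (w i) = κ * w i + ∑ j, c i j • w j) {i j : ι}
    (hij : w i * d (w j) - w j * d (w i) ≠ 0) : HasElementarySolution d K := by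
  let W := Submodule.span C (Set.range w)
  have hmem (i) : w i ∈ W := Submodule.subset_span ⟨i, rfl⟩
  have : FiniteDimensional C W := .span_of_finite C (Set.finite_range w)
  have hWK : W ≤ K.toSubalgebra.toSubmodule := Submodule.span_le.2 <| by
    rintro _ ⟨i, rfl⟩
    exact hwK i
  have hW : W ≤ W.comap ((d : F →ₗ[C] F) - LinearMap.mulLeft C κ) := Submodule.span_le.2 <| by
    rintro _ ⟨i, rfl⟩
    simpa [hw] using sum_mem fun j _ ↦ W.smul_mem _ (hmem j)
  exact hasElementarySolution_of_invariant_submodule κ hWK hW (hmem i) (hmem j) hij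

theorem exists_fg_subalgebra_sup {S : Set F} (hS : S.Finite)
    (hSM : ∀ y ∈ S, y ∈ ringCompositum M K) :
    ∃ A ≤ M.toSubalgebra, A.FG ∧ ∀ y ∈ S, y ∈ A ⊔ K.toSubalgebra := by
  have hmono {A B : Subalgebra C F} (h : A ≤ B) {y : F} (hy : y ∈ A ⊔ K.toSubalgebra) :
      y ∈ B ⊔ K.toSubalgebra := sup_le_sup_right h K.toSubalgebra hy
  have hsingle {y : F} (hy : y ∈ ringCompositum M K) :
      ∃ A ≤ M.toSubalgebra, A.FG ∧ y ∈ A ⊔ K.toSubalgebra := by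
    refine ringCompositum_induction (fun l hl k hk ↦ ?_) ?_ hy
    · refine ⟨Algebra.adjoin C {l}, Algebra.adjoin_le (Set.singleton_subset_iff.2 hl),
        ⟨{l}, by simp⟩, mul_mem ?_ ?_⟩
      · exact (le_sup_left : Algebra.adjoin C {l} ≤ _) (Algebra.self_mem_adjoin_singleton C l)
      · exact (le_sup_right : K.toSubalgebra ≤ _) hk
    · rintro y z ⟨A, hA, hAfg, hy⟩ ⟨B, hB, hBfg, hz⟩
      exact ⟨A ⊔ B, sup_le hA hB, hAfg.sup hBfg,
        add_mem (hmono le_sup_left hy) (hmono le_sup_right hz)⟩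
  induction S, hS using Set.Finite.induction_on with
  | empty => exact ⟨⊥, bot_le, Subalgebra.fg_bot, by simp⟩
  | @insert y S _ _ ih =>
    obtain ⟨A, hA, hAfg, hy⟩ := hsingle (hSM y (Set.mem_insert y S))
    obtain ⟨B, hB, hBfg, hS⟩ := ih fun z hz ↦ hSM z (Set.mem_insert_of_mem y hz)
    exact ⟨A ⊔ B, sup_le hA hB, hAfg.sup hBfg, Set.forall_mem_insert.2
      ⟨hmono le_sup_left hy, fun z hz ↦ hmono le_sup_right (hS z hz)⟩⟩

theorem hasElementarySolution_of_tensor_linearSystem [IsAlgClosed C]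
    {B : Subalgebra C F} (hBK : B ≤ K.toSubalgebra) (hB : ∀ y ∈ B, d y ∈ B) {A : Type*} [CommRing A]
    [IsReduced A] [Algebra C A] [Algebra.FiniteType C A]
    {T : A ⊗[C] B →ₗ[C] A ⊗[C] B} (hT : T = (restrictDerivation d B hB : B →ₗ[C] B).lTensor A)
    {ι : Type*} [Fintype ι] {w : ι → A ⊗[C] B} {g h : A ⊗[C] B}
    (c : ι → ι → A) (hw : ∀ i, g * T (w i) = h * w i + g * ∑ j, c i j • w j) {i j : ι}
    (hij : g * (w i * T (w j) - w j * T (w i)) ≠ 0) : HasElementarySolution d K := by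
  obtain ⟨φ, hφ⟩ := exists_specialize_ne_zero hij
  let Φ : A ⊗[C] B →ₐ[C] F := B.val.comp (specialize φ)
  have hΦT (t) : Φ (T t) = d (Φ t) := by
    induction t with
    | zero => simp
    | tmul a y => simp [Φ, hT, specialize_tmul, coe_restrictDerivation]
    | add t u ht hu => simp [ht, hu]
  have hΦ : Φ g * (Φ (w i) * d (Φ (w j)) - Φ (w j) * d (Φ (w i))) ≠ 0 := by
    rw [← hΦT, ← hΦT, ← map_mul, ← map_mul, ← map_sub, ← map_mul]
    exact fun h ↦ hφ (Subtype.ext h)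
  have hg : Φ g ≠ 0 := left_ne_zero_of_mul hΦ
  refine hasElementarySolution_of_linearSystem (w := Φ ∘ w) (fun i ↦ hBK (specialize φ (w i)).2)
    (Φ h / Φ g) (fun i j ↦ φ (c i j)) (fun i ↦ mul_left_cancel₀ hg ?_) (right_ne_zero_of_mul hΦ)
  have hsmul (i j) : Φ (c i j • w j) = φ (c i j) • Φ (w j) := by
    simp [Φ, specialize_smul]
  have := congrArg Φ (hw i)
  simp only [map_mul, map_add, map_sum, hsmul, hΦT] at this
  simp only [Function.comp_apply, this]
  field

theorem hasElementarySolution_of_fg_linearSystem [IsAlgClosed C]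
    {B : Subalgebra C F} (hBK : B ≤ K.toSubalgebra) (hB : ∀ y ∈ B, d y ∈ B) {A : Subalgebra C F}
    (hA : A.FG) (hdA : ∀ a ∈ A, d a = 0) (hAB : A.LinearDisjoint B)
    {ι : Type*} [Fintype ι] {w : ι → F}
    (hwA : ∀ i, w i ∈ A ⊔ B) {g h : F} (hgA : g ∈ A ⊔ B)
    (hhA : h ∈ A ⊔ B) (hg : g ≠ 0) (c : ι → ι → A)
    (hw : ∀ i, g * d (w i) = h * w i + g * ∑ j, c i j • w j) {i j : ι}
    (hij : w i * d (w j) - w j * d (w i) ≠ 0) : HasElementarySolution d K := by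
  have : Algebra.FiniteType C A := A.fg_iff_finiteType.1 hA
  let θ := A.mulMap B
  have hθ : Function.Injective θ := Subalgebra.linearDisjoint_iff_injective.1 hAB
  have hlift {y : F} (hy : y ∈ A ⊔ B) : ∃ t, θ t = y := by
    rwa [← Subalgebra.mulMap_range] at hy
  choose w' hw' using fun i ↦ hlift (hwA i)
  obtain ⟨g', rfl⟩ := hlift hgA
  obtain ⟨h', rfl⟩ := hlift hhA
  obtain rfl : θ ∘ w' = w := funext hw'
  let T := (restrictDerivation d B hB : B →ₗ[C] B).lTensor A
  have hθT (t) : θ (T t) = d (θ t) := by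
    induction t with
    | zero => simp
    | tmul a y => simp [θ, T, coe_restrictDerivation, hdA a a.2]
    | add t u ht hu => simp [ht, hu]
  have hθsmul (a : A) (t) : θ (a • t) = a • θ t := by
    induction t with
    | zero => simp
    | tmul b y => simp [θ, TensorProduct.smul_tmul', Subalgebra.smul_def, mul_assoc]
    | add t u ht hu => simp [ht, hu]
  refine hasElementarySolution_of_tensor_linearSystem hBK hB (T := T) rfl (w := w') (g := g')
    (h := h') c (fun i ↦ hθ ?_) (i := i) (j := j) (fun h ↦ mul_ne_zero hg hij ?_)
  · simpa [hθT, hθsmul] using hw i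
  · simpa [hθT] using congrArg θ h

theorem exists_common_denominator (hMK : M ⊔ K = ⊤) {S : Set F} (hS : S.Finite) :
    ∃ g ∈ ringCompositum M K, g ≠ 0 ∧ ∀ y ∈ S, g * y ∈ ringCompositum M K := by
  have : IsFractionRing (ringCompositum M K) F := .of_field _ _ fun y ↦ by
    obtain ⟨a, ha, b, hb, rfl⟩ := exists_div_of_mem_sup (by simp [hMK] : y ∈ M ⊔ K)
    exact ⟨⟨a, ha⟩, ⟨b, hb⟩, rfl⟩
  have : Finite S := hS
  obtain ⟨g, hg⟩ := IsLocalization.exist_integer_multiples_of_finite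
    (nonZeroDivisors (ringCompositum M K)) (fun y : S ↦ (y : F))
  refine ⟨g, (g : ringCompositum M K).2, by simp, fun y hy ↦ ?_⟩
  obtain ⟨z, hz⟩ := hg ⟨y, hy⟩
  exact (congrArg (· ∈ ringCompositum M K) hz).mp z.2

theorem hasElementarySolution_of_ringCompositum_linearSystem [IsAlgClosed C]
    (hK : ∀ y ∈ K, d y ∈ K) (hM : M ≤ constantField d) (hMK : M.LinearDisjoint K) {ι : Type*}
    [Fintype ι] {w : ι → F} (hw : ∀ i, w i ∈ ringCompositum M K) {g h : F}
    (hg : g ∈ ringCompositum M K) (hh : h ∈ ringCompositum M K) (hg0 : g ≠ 0) (c : ι → ι → M)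
    (hdw : ∀ i, g * d (w i) = h * w i + g * ∑ j, c i j • w j) {i j : ι}
    (hij : w i * d (w j) - w j * d (w i) ≠ 0) : HasElementarySolution d K := by
  let S : Set F := insert g (insert h (Set.range w))
  let cs : Set F := Set.range fun ij : ι × ι ↦ (c ij.1 ij.2 : F)
  obtain ⟨A, hAM, hA, hAS⟩ := exists_fg_subalgebra_sup (M := M) (K := K) (S := S)
    (Set.toFinite S) (by simp [S, hg, hh, hw])
  let A' : Subalgebra C F := A ⊔ Algebra.adjoin C cs
  have hA'M : A' ≤ M.toSubalgebra := sup_le hAM <| Algebra.adjoin_le <| by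
    rintro _ ⟨ij, rfl⟩
    exact (c ij.1 ij.2).2
  have hA' : A'.FG := hA.sup (Subalgebra.fg_def.2 ⟨cs, Set.toFinite cs, rfl⟩)
  have hS (y) (hy : y ∈ S) : y ∈ A' ⊔ K.toSubalgebra :=
    sup_le_sup_right le_sup_left K.toSubalgebra (hAS y hy)
  have hcs (i j) : (c i j : F) ∈ A' :=
    (le_sup_right : Algebra.adjoin C cs ≤ A') (Algebra.subset_adjoin ⟨(i, j), rfl⟩)
  have hdisj : A'.LinearDisjoint K.toSubalgebra :=
    (IntermediateField.linearDisjoint_iff'.1 hMK).of_le_left_of_flat hA'M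
  exact hasElementarySolution_of_fg_linearSystem (B := K.toSubalgebra) le_rfl hK hA'
    (fun a ha ↦ hM (hA'M ha)) hdisj (fun i ↦ hS _ (by simp [S])) (hS g (by simp [S]))
    (hS h (by simp [S])) hg0 (fun i j ↦ ⟨c i j, hcs i j⟩) hdw hij

theorem hasElementarySolution_of_fg [IsAlgClosed C] (hK : ∀ y ∈ K, d y ∈ K)
    (hM : M ≤ constantField d) (hMK : M.LinearDisjoint K) (hMKtop : M ⊔ K = ⊤) (κ : F)
    {W : Submodule M F} (hWfg : W.FG) (hW : ∀ y ∈ W, d y - κ * y ∈ W) {p q : F} (hp : p ∈ W)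
    (hq : q ∈ W) (hpq : p * d q - q * d p ≠ 0) : HasElementarySolution d K := by
  classical
  obtain ⟨S, hS⟩ := hWfg
  let S' : Finset F := insert p (insert q S)
  have hS' : Submodule.span M (Set.range ((↑) : S' → F)) = W := by
    rw [Subtype.range_coe, Finset.coe_insert, Finset.coe_insert, Submodule.span_insert,
      Submodule.span_insert, hS, sup_eq_right.2 ((Submodule.span_singleton_le_iff_mem _ _).2 hq),
      sup_eq_right.2 ((Submodule.span_singleton_le_iff_mem _ _).2 hp)]
  have hS'W (i : S') : (i : F) ∈ W := hS' ▸ Submodule.subset_span (Set.mem_range_self i)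
  choose c hc using fun i : S' ↦
    (Submodule.mem_span_range_iff_exists_fun M).1 (hS'.symm ▸ hW i (hS'W i))
  obtain ⟨g, hg, hg0, hgS'⟩ := exists_common_denominator hMKtop (insert κ S').finite_toSet
  have hh : g * κ + d g ∈ ringCompositum M K := add_mem (hgS' κ (by simp)) <|
    apply_mem_ringCompositum (fun y hy ↦ (hM hy : d y = 0) ▸ zero_mem M) hK hg
  refine hasElementarySolution_of_ringCompositum_linearSystem hK hM hMK
    (w := fun i : S' ↦ g * i) (fun i ↦ hgS' i (by simp)) hg hh hg0 c (fun i ↦ ?_)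
    (i := ⟨p, by simp [S']⟩) (j := ⟨q, by simp [S']⟩) ?_
  · have hsum : ∑ j, c i j • (g * (j : F)) = g * (d i - κ * i) := by
      simp only [← hc, Finset.mul_sum, mul_smul_comm]
    rw [hsum, d.leibniz, smul_eq_mul, smul_eq_mul]
    ring
  · have hgpq : g ^ 2 * (p * d q - q * d p) ≠ 0 := mul_ne_zero (pow_ne_zero 2 hg0) hpq
    convert hgpq using 1
    simp only [d.leibniz, smul_eq_mul]
    ring

end InvariantSubspaces

section UniqueFactorization

variable {C F : Type*} [Field C] [Field F] [Algebra C F] {L : IntermediateField C F}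
  {ι : Type*} {x : ι → F}

theorem algebraicIndependent_of_linearDisjoint
    (hL : L.LinearDisjoint (IntermediateField.adjoin C (Set.range x)))
    (hx : AlgebraicIndependent C x) : AlgebraicIndependent L x := by
  let x' (i : ι) : IntermediateField.adjoin C (Set.range x) :=
    ⟨x i, IntermediateField.subset_adjoin C _ ⟨i, rfl⟩⟩
  have hx' : AlgebraicIndependent C x' :=
    AlgebraicIndependent.of_comp (IntermediateField.val _) hx
  have hmon : LinearIndependent L fun I ↦
      MvPolynomial.aeval x (MvPolynomial.monomial I (1 : C)) := by
    convert! hL.linearIndependent_right ((MvPolynomial.basisMonomials ι C).linearIndependent.map'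
      (MvPolynomial.aeval x').toLinearMap (LinearMap.ker_eq_bot.2 hx')) with I
    simp [x', MvPolynomial.aeval_monomial, Finsupp.prod]
  have haeval : (MvPolynomial.aeval (R := L) x).toLinearMap =
      (Finsupp.linearCombination L fun I ↦
        MvPolynomial.aeval x (MvPolynomial.monomial I (1 : C))).comp
          (MvPolynomial.basisMonomials ι L).repr.toLinearMap :=
    (MvPolynomial.basisMonomials ι L).ext fun I ↦ by
      rw [LinearMap.comp_apply, LinearEquiv.coe_coe, Module.Basis.repr_self]
      simp [MvPolynomial.aeval_monomial]
  rw [algebraicIndependent_iff_injective_aeval]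
  change Function.Injective (MvPolynomial.aeval (R := L) x).toLinearMap
  rw [haeval]
  exact (LinearIndependent.finsuppLinearCombination_injective hmon).comp
    (MvPolynomial.basisMonomials ι L).repr.injective

theorem exists_mul_aeval_eq_aeval {y : F}
    (hy : y ∈ ringCompositum L (IntermediateField.adjoin C (Set.range x))) :
    ∃ (p : MvPolynomial ι L) (s : MvPolynomial ι C), MvPolynomial.aeval x s ≠ 0 ∧
      y * MvPolynomial.aeval x s = MvPolynomial.aeval x p := by
  refine ringCompositum_induction (fun l hl k hk ↦ ?_) ?_ hy
  · obtain ⟨r, s, rfl⟩ := (IntermediateField.mem_adjoin_range_iff C x k).1 hk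
    by_cases hs : MvPolynomial.aeval x s = 0
    · exact ⟨0, 1, by simp, by simp [hs]⟩
    · refine ⟨MvPolynomial.C ⟨l, hl⟩ * r.map (algebraMap C L), s, hs, ?_⟩
      rw [map_mul, MvPolynomial.aeval_map_algebraMap, MvPolynomial.aeval_C, mul_assoc,
        div_mul_cancel₀ _ hs]
      rfl
  · rintro y z ⟨p, s, hs, hp⟩ ⟨q, t, ht, hq⟩
    refine ⟨p * t.map (algebraMap C L) + q * s.map (algebraMap C L), s * t, by simp [hs, ht], ?_⟩
    simp only [map_mul, map_add, MvPolynomial.aeval_map_algebraMap, ← hp, ← hq]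
    ring

theorem uniqueFactorizationMonoid_ringCompositum_adjoin (hx : AlgebraicIndependent L x) :
    UniqueFactorizationMonoid (ringCompositum L (IntermediateField.adjoin C (Set.range x))) := by
  set K := IntermediateField.adjoin C (Set.range x)
  have hxR (p : MvPolynomial ι L) : MvPolynomial.aeval x p ∈ ringCompositum L K := by
    induction p using MvPolynomial.induction_on with
    | C a => simpa using left_mem_ringCompositum a.2
    | add p q hp hq => simpa using add_mem hp hq
    | mul_X p i hp =>
      simpa using mul_mem hp
        (right_mem_ringCompositum (IntermediateField.subset_adjoin C _ ⟨i, rfl⟩))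
  let f : MvPolynomial ι L →+* ringCompositum L K :=
    (MvPolynomial.aeval x).toRingHom.codRestrict (ringCompositum L K) hxR
  have hf : Function.Injective f := fun p q hpq ↦ hx congr(($hpq : F))
  have hfC (s : MvPolynomial ι C) :
      (f (s.map (algebraMap C L)) : F) = MvPolynomial.aeval x s :=
    MvPolynomial.aeval_map_algebraMap ..
  algebraize [f]
  let S := (nonZeroDivisors (MvPolynomial ι C)).map (MvPolynomial.map (algebraMap C L))
  have : IsLocalization S (ringCompositum L K) := by
    refine (isLocalization_iff _ _).2 ⟨?_, fun z ↦ ?_, fun h ↦ ⟨1, by rw [hf h]⟩⟩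
    · rintro ⟨_, s, hs, rfl⟩
      have hs0 : MvPolynomial.aeval x s ≠ 0 := by
        rw [← MvPolynomial.aeval_map_algebraMap L]
        simpa [map_eq_zero_iff _ hx, map_eq_zero_iff _ (MvPolynomial.map_injective _
          (algebraMap C L).injective)] using nonZeroDivisors.ne_zero hs
      refine .of_mul_eq_one ⟨(MvPolynomial.aeval x s)⁻¹, ?_⟩ (Subtype.ext ?_)
      · exact right_mem_ringCompositum (inv_mem ((IntermediateField.mem_adjoin_range_iff C x _).2
          ⟨s, 1, by simp⟩))
      · exact (congr_arg (· * _) (hfC s)).trans (mul_inv_cancel₀ hs0)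
    · obtain ⟨p, s, hs, hp⟩ := exists_mul_aeval_eq_aeval z.2
      refine ⟨⟨p, _, s, mem_nonZeroDivisors_of_ne_zero fun h ↦ hs (by simp [h]), rfl⟩,
        Subtype.ext ?_⟩
      exact (congr_arg _ (hfC s)).trans hp
  exact UniqueFactorizationMonoid.of_isLocalization S _

end UniqueFactorization

section Darboux

variable {k R : Type*} [Field k] [CommRing R] [Algebra k R]

/-- `a` is a Darboux element for the derivation `d` when it divides `d a`; for a polynomial
vector field this says that the hypersurface `a = 0` is invariant. -/
def IsDarboux (d : Derivation k R R) (a : R) : Prop := a ∣ d a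

variable {d d' : Derivation k R R} {a b p : R}

theorem IsDarboux.mul (ha : IsDarboux d a) (hb : IsDarboux d b) : IsDarboux d (a * b) := by
  rw [IsDarboux, Derivation.leibniz]
  exact dvd_add (mul_dvd_mul_left a hb) (mul_comm a b ▸ mul_dvd_mul_left b ha)

theorem isDarboux_of_isRelPrime_of_mul_eq [DecompositionMonoid R] (hab : IsRelPrime a b)
    (h : b * d a = a * d b) : IsDarboux d a :=
  hab.dvd_of_dvd_mul_left ⟨d b, h⟩

theorem isUnit_natCast_of_charZero (k : Type*) {R : Type*} [Field k] [CharZero k] [CommRing R]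
    [Algebra k R] {n : ℕ} (hn : n ≠ 0) : IsUnit (n : R) := by
  rw [← map_natCast (algebraMap k R)]
  exact (IsUnit.mk0 _ (Nat.cast_ne_zero.2 hn)).map _

variable [UniqueFactorizationMonoid R]

theorem isDarboux_of_prime_of_dvd_mul [IsDomain R] [CharZero k] (hp : Prime p) (ha : a ≠ 0)
    (hpa : p ∣ a) (hpb : ¬ p ∣ b) (h : a ∣ b * d a) : IsDarboux d p := by
  obtain ⟨c, hac, hpc⟩ := (FiniteMultiplicity.of_prime_left hp ha).exists_eq_pow_mul_and_not_dvd
  obtain ⟨m, hm⟩ : ∃ m, multiplicity p a = m + 1 :=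
    Nat.exists_eq_add_one_of_ne_zero fun h0 ↦ by
      rw [h0, pow_zero, one_mul] at hac
      exact hpc (hac ▸ hpa)
  have hfactor : b * d a = p ^ m * (p * (b * d c) + b * (c * ((m + 1 : ℕ) * d p))) := by
    rw [hac, hm, Derivation.leibniz, Derivation.leibniz_pow]
    simp only [smul_eq_mul, nsmul_eq_mul, add_tsub_cancel_right]
    ring
  have hdvd : p ∣ b * (c * ((m + 1 : ℕ) * d p)) := by
    rw [← dvd_add_right (dvd_mul_right p (b * d c)),
      ← mul_dvd_mul_iff_left (pow_ne_zero m hp.ne_zero), ← hfactor, ← pow_succ, ← hm]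
    exact .trans ⟨c, hac⟩ h
  have := (hp.dvd_or_dvd ((hp.dvd_or_dvd hdvd).resolve_left hpb)).resolve_left hpc
  exact (isUnit_natCast_of_charZero k m.succ_ne_zero).dvd_mul_left.1 this

theorem IsDarboux.of_dvd [IsDomain R] [CharZero k] (ha : IsDarboux d a) (ha0 : a ≠ 0) (hp : Prime p)
    (hpa : p ∣ a) : IsDarboux d p :=
  isDarboux_of_prime_of_dvd_mul hp ha0 hpa hp.not_dvd_one (by rwa [one_mul])

theorem isDarboux_of_forall_prime (h : ∀ p, Prime p → p ∣ a → IsDarboux d p) :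
    IsDarboux d a := by
  induction a using UniqueFactorizationMonoid.induction_on_prime with
  | h₁ => simp [IsDarboux]
  | h₂ a ha => exact ha.dvd
  | h₃ a p _ hp ih =>
    exact (h p hp (dvd_mul_right p a)).mul (ih fun q hq hqa ↦ h q hq (hqa.mul_left p))

theorem isDarboux_of_dvd_mul [IsDomain R] [CharZero k] (hb : IsDarboux d' b) (hb0 : b ≠ 0)
    (hdd' : ∀ p, Prime p → IsDarboux d p → IsDarboux d' p) (ha : a ≠ 0) (h : a ∣ b * d a) :
    IsDarboux d' a := by
  refine isDarboux_of_forall_prime fun p hp hpa ↦ ?_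
  by_cases hpb : p ∣ b
  · exact hb.of_dvd hb0 hp hpb
  · exact hdd' p hp (isDarboux_of_prime_of_dvd_mul hp ha hpa hpb h)

end Darboux

section FiniteIterates

variable {C F : Type*} [Field C] [Field F] [Algebra C F]

/-- All iterates `y, d y, d (d y), …` lie in one finite-dimensional `L`-subspace of `F`, that is,
`y` satisfies a homogeneous linear recurrence under `d` over `L`. -/
def HasFiniteIterates (d : Derivation C F F) (L : IntermediateField C F) (y : F) : Prop :=
  ∃ W : Submodule L F, W.FG ∧ ∀ n, d^[n] y ∈ W

/-- The `L`-subspace spanned by all iterates under `d` of the elements of `S`, the smallest one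
that contains `S` and is stable under `d` when `L` is. -/
def iterSpan (d : Derivation C F F) (L : IntermediateField C F) (S : Set F) : Submodule L F :=
  Submodule.span L (⋃ n, d^[n] '' S)

variable {d v : Derivation C F F} {L : IntermediateField C F}

theorem HasFiniteIterates.add {y z : F} (hy : HasFiniteIterates d L y)
    (hz : HasFiniteIterates d L z) : HasFiniteIterates d L (y + z) := by
  obtain ⟨W, hWfg, hW⟩ := hy
  obtain ⟨U, hUfg, hU⟩ := hz
  refine ⟨W ⊔ U, hWfg.sup hUfg, fun n ↦ ?_⟩
  rw [iterate_map_add]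
  exact Submodule.add_mem_sup (hW n) (hU n)

theorem hasFiniteIterates_of_mem_constantField {y : F} (hy : y ∈ constantField d) :
    HasFiniteIterates d L y := by
  refine ⟨_, Submodule.fg_span_singleton y, fun n ↦ ?_⟩
  cases n with
  | zero => exact Submodule.mem_span_singleton_self y
  | succ n =>
    rw [Function.iterate_succ_apply, mem_constantField.1 hy, iterate_map_zero]
    exact zero_mem _

theorem iterate_mem_iterSpan {S : Set F} {s : F} (hs : s ∈ S) (n : ℕ) : d^[n] s ∈ iterSpan d L S :=
  Submodule.subset_span (Set.mem_iUnion_of_mem n (Set.mem_image_of_mem _ hs))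

theorem apply_mem_iterSpan (hL : ∀ y ∈ L, d y ∈ L) {S : Set F} {y : F} (hy : y ∈ iterSpan d L S) :
    d y ∈ iterSpan d L S := by
  induction hy using Submodule.span_induction with
  | mem y hy =>
    obtain ⟨n, s, hs, rfl⟩ := Set.mem_iUnion.1 hy
    exact (Function.iterate_succ_apply' d n s) ▸ iterate_mem_iterSpan hs (n + 1)
  | zero => exact (map_zero d).symm ▸ zero_mem (iterSpan d L S)
  | add y z _ _ hy hz => exact map_add d y z ▸ add_mem hy hz
  | smul l y hmem hy =>
    have hl : d (l • y) = l • d y + (⟨d l, hL l l.2⟩ : L) • y :=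
      (d.leibniz l y).trans (congrArg _ (mul_comm _ _))
    exact hl ▸ add_mem (Submodule.smul_mem _ _ hy) (Submodule.smul_mem _ _ hmem)

theorem iterSpan_fg {S : Set F} (hS : S.Finite) (h : ∀ s ∈ S, HasFiniteIterates d L s) :
    (iterSpan d L S).FG := by
  choose! W hWfg hW using h
  have := hS.to_subtype
  refine (Submodule.fg_iSup (fun s : S ↦ W s) fun s ↦ hWfg s s.2).of_le (Submodule.span_le.2 ?_)
  refine Set.iUnion_subset fun n ↦ ?_
  rintro _ ⟨s, hs, rfl⟩
  exact Submodule.mem_iSup_of_mem (⟨s, hs⟩ : S) (hW s hs n)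

theorem hasFiniteIterates_of_sum_mul_mem {n : ℕ} {b η : Fin n → F}
    (hb : LinearIndependent (constantField v) b) {U : Submodule (constantField v) F} (hU : U.FG)
    (hη : ∀ j, ∑ i, v^[j] (η i) * b i ∈ U) (i : Fin n) :
    HasFiniteIterates v (constantField v) (η i) := by
  induction n generalizing U with
  | zero => exact i.elim0
  | succ n ih =>
    have hb0 : b 0 ≠ 0 := hb.ne_zero 0
    set b' : Fin (n + 1) → F := fun i ↦ (b 0)⁻¹ * b i
    have hb'0 : b' 0 = 1 := inv_mul_cancel₀ hb0
    set U' := U.map (LinearMap.mulLeft (constantField v) (b 0)⁻¹)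
    have hU' : U'.FG := hU.map _
    have hη' (j) : v^[j] (η 0) + ∑ i : Fin n, v^[j] (η i.succ) * b' i.succ ∈ U' :=
      ⟨_, hη j, by simp [Finset.mul_sum, Fin.sum_univ_succ, b', hb0, mul_left_comm (b 0)⁻¹,
        mul_add]⟩
    have hderiv (j) : ∑ i : Fin n, v^[j] (η i.succ) * v (b' i.succ) ∈
        U'.map (constantLinearMap v) ⊔ U' := by
      convert! sub_mem (Submodule.mem_sup_left (Submodule.mem_map_of_mem (hη' j)))
        (Submodule.mem_sup_right (hη' (j + 1))) using 1
      simp [constantLinearMap, Finset.sum_add_distrib, Function.iterate_succ_apply', mul_comm]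
    have htail (i : Fin n) : HasFiniteIterates v (constantField v) (η i.succ) :=
      ih (linearIndependent_derivation_succ (L := ⊤) (by ext; simp [mem_constantField])
        (fun _ ↦ trivial) (linearIndependent_mul_left hb (inv_ne_zero hb0)) hb'0)
        ((hU'.map _).sup hU') hderiv i
    refine i.cases ?_ htail
    choose W hWfg hW using htail
    refine ⟨U' ⊔ ⨆ i, (W i).map (LinearMap.mulRight (constantField v) (b' i.succ)),
      hU'.sup (Submodule.fg_iSup _ fun i ↦ (hWfg i).map _), fun j ↦ ?_⟩
    rw [← add_sub_cancel_right (v^[j] (η 0)) (∑ i : Fin n, v^[j] (η i.succ) * b' i.succ)]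
    exact sub_mem (Submodule.mem_sup_left (hη' j)) (Submodule.mem_sup_right (sum_mem fun i _ ↦
      Submodule.mem_iSup_of_mem i (Submodule.mem_map_of_mem (hW i j))))

end FiniteIterates

section PoleOrder

variable {C F : Type*} [Field C] [Field F] [Algebra C F] {D δ : Derivation C F F}

theorem exists_isRelPrime_div {R : Subalgebra C F} [UniqueFactorizationMonoid R] {a b : F}
    (ha : a ∈ R) (hb : b ∈ R) : ∃ p q : R, q ≠ 0 ∧ IsRelPrime p q ∧ a / b = p / q := by
  obtain rfl | hb0 := eq_or_ne b 0
  · exact ⟨0, 1, one_ne_zero, isRelPrime_one_right, by simp⟩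
  obtain ⟨p, q, c, hpq, hpa, hqb⟩ := UniqueFactorizationMonoid.exists_reduced_factors'
    (⟨a, ha⟩ : R) ⟨b, hb⟩ (by simpa [Subtype.ext_iff] using hb0)
  have hpa' : (c * p : F) = a := congr(($hpa : F))
  have hqb' : (c * q : F) = b := congr(($hqb : F))
  subst hpa' hqb'
  refine ⟨p, q, ?_, hpq, mul_div_mul_left _ _ (left_ne_zero_of_mul hb0)⟩
  simpa using right_ne_zero_of_mul hb0

theorem exists_mem_span_image_Iio {k V : Type*} [Ring k] [IsNoetherianRing k] [AddCommGroup V]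
    [Module k V] {W : Submodule k V} (hW : W.FG) {s : ℕ → V} (hs : ∀ n, s n ∈ W) :
    ∃ n, s n ∈ Submodule.span k (s '' Set.Iio n) := by
  have hfg : (Submodule.span k (s '' Set.univ)).FG :=
    .of_le hW (Submodule.span_le.2 (Set.image_subset_iff.2 fun n _ ↦ hs n))
  classical
  obtain ⟨t, hts, ht⟩ := (Submodule.fg_span_iff_fg_span_finset_subset _).1 hfg
  obtain ⟨I, -, rfl⟩ := Finset.subset_set_image_iff.1 hts
  obtain ⟨n, hn⟩ := I.exists_nat_subset_range
  have hsn : s n ∈ Submodule.span k (s '' Set.univ) :=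
    Submodule.subset_span (Set.mem_image_of_mem s (Set.mem_univ n))
  rw [ht, Finset.coe_image] at hsn
  exact ⟨n, Submodule.span_mono (Set.image_mono fun i hi ↦ Finset.mem_range.1 (hn hi)) hsn⟩

theorem exists_sub_mem_ker_of_fg {k V V' : Type*} [Ring k] [IsNoetherianRing k] [AddCommGroup V]
    [Module k V] [AddCommGroup V'] [Module k V'] (T : V →ₗ[k] V') {W : Submodule k V'} (hW : W.FG)
    {s : ℕ → V} (hs : ∀ n, T (s n) ∈ W) :
    ∃ n, ∃ t ∈ Submodule.span k (s '' Set.Iio n), s n - t ∈ LinearMap.ker T := by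
  obtain ⟨n, hn⟩ := exists_mem_span_image_Iio hW hs
  rw [← Function.comp_def T s, Set.image_comp, ← Submodule.map_span] at hn
  obtain ⟨t, ht, htn⟩ := hn
  exact ⟨n, t, ht, by simp [htn]⟩

theorem exists_iterate_logDeriv_eq_div_pow [CharZero C] {R : Subalgebra C F}
    (hδ : ∀ y ∈ R, δ y ∈ R) {A : R}
    (hA : Prime A) (hAδ : ¬ IsDarboux (restrictDerivation δ R hδ) A) (n : ℕ) :
    ∃ u : R, ¬ A ∣ u ∧ δ^[n] (δ A / A) = u / A ^ (n + 1) := by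
  have hA0 : (A : F) ≠ 0 := by simpa using hA.ne_zero
  induction n with
  | zero => exact ⟨restrictDerivation δ R hδ A, hAδ, by simp [coe_restrictDerivation]⟩
  | succ n ih =>
    obtain ⟨u, hAu, hu⟩ := ih
    refine ⟨A * restrictDerivation δ R hδ u -
      (n + 1 : ℕ) * (u * restrictDerivation δ R hδ A), ?_, ?_⟩
    · rw [dvd_sub_right (dvd_mul_right A _),
        (isUnit_natCast_of_charZero C n.succ_ne_zero).dvd_mul_left]
      exact hA.not_dvd_mul hAu hAδ
    · rw [Function.iterate_succ_apply', hu, Derivation.leibniz_div, Derivation.leibniz_pow]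
      push_cast [coe_restrictDerivation]
      simp only [smul_eq_mul, nsmul_eq_mul]
      push_cast
      field_simp
      ring

theorem mul_pow_mem_of_mem_span_iterate_logDeriv [CharZero C] {E : IntermediateField C F}
    {R : Subalgebra C F} (hER : E.toSubalgebra ≤ R) (hδ : ∀ y ∈ R, δ y ∈ R) {A : R}
    (hA : Prime A) (hAδ : ¬ IsDarboux (restrictDerivation δ R hδ) A) {n : ℕ} {t : F}
    (ht : t ∈ Submodule.span E ((fun m ↦ δ^[m] (δ A / A)) '' Set.Iio n)) : t * A ^ n ∈ R := by
  have hA0 : (A : F) ≠ 0 := by simpa using hA.ne_zero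
  induction ht using Submodule.span_induction with
  | mem y hy =>
    obtain ⟨m, hm : m < n, rfl⟩ := hy
    obtain ⟨u, -, hu⟩ := exists_iterate_logDeriv_eq_div_pow hδ hA hAδ m
    have hu' : δ^[m] (δ A / A) * A ^ n = u * A ^ (n - (m + 1)) := by
      rw [hu, div_mul_eq_mul_div, div_eq_iff (pow_ne_zero _ hA0), mul_assoc, ← pow_add,
        Nat.sub_add_cancel hm]
    exact hu' ▸ (u * A ^ (n - (m + 1))).2
  | zero => simp
  | add y z _ _ hy hz => exact add_mul y z _ ▸ add_mem hy hz
  | smul e y _ hy => exact smul_mul_assoc e y _ ▸ mul_mem (hER e.2) hy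

theorem derivation_iterate_logDeriv (hcomm : ∀ y, D (δ y) = δ (D y)) {A α : F} (hA : A ≠ 0)
    (hα : D A = A * α) (n : ℕ) : D (δ^[n] (δ A / A)) = δ^[n + 1] α := by
  have hlog : D (δ A / A) = δ α := by
    rw [Derivation.leibniz_div, hcomm, hα, δ.leibniz]
    simp only [smul_eq_mul]
    field_simp
    ring
  rw [Function.iterate_succ_apply, ← hlog]
  exact Function.Commute.iterate_right (f := D) hcomm n _

/- If `A ∤ δ A`, then `δ^[n] (δ A / A)` has a pole of order exactly `n + 1` along `A`. Its image
under `D` however stays in a finite-dimensional space, so these poles cannot all be new. -/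
theorem isDarboux_of_commute [CharZero C] (hcomm : ∀ y, D (δ y) = δ (D y)) {R : Subalgebra C F}
    (hD : ∀ y ∈ R, D y ∈ R) (hδ : ∀ y ∈ R, δ y ∈ R) (hER : (constantField D).toSubalgebra ≤ R)
    (hfin : ∀ y ∈ R, HasFiniteIterates δ (constantField D) y)
    {A : R} (hA : Prime A) (hAD : IsDarboux (restrictDerivation D R hD) A) :
    IsDarboux (restrictDerivation δ R hδ) A := by
  by_contra hAδ
  have hA0 : (A : F) ≠ 0 := by simpa using hA.ne_zero
  obtain ⟨α, hα⟩ := hAD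
  have hlog := derivation_iterate_logDeriv hcomm hA0 (α := α) congr(($hα : F))
  obtain ⟨W, hWfg, hW⟩ := hfin α α.2
  obtain ⟨n, t, ht, htn⟩ := exists_sub_mem_ker_of_fg (constantLinearMap D) hWfg
    (s := fun n ↦ δ^[n] (δ A / A)) fun n ↦ (hlog n).symm ▸ hW (n + 1)
  obtain ⟨u, hAu, hu⟩ := exists_iterate_logDeriv_eq_div_pow hδ hA hAδ n
  obtain ⟨e, he⟩ : ∃ e : R, δ^[n] (δ A / A) - t = e := ⟨⟨_, hER htn⟩, rfl⟩
  obtain ⟨r, hr⟩ : ∃ r : R, t * A ^ n = r :=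
    ⟨⟨_, mul_pow_mem_of_mem_span_iterate_logDeriv hER hδ hA hAδ ht⟩, rfl⟩
  refine hAu ⟨r + e * A ^ n, Subtype.ext ?_⟩
  push_cast
  rw [← hr, ← he, hu]
  field_simp
  ring

end PoleOrder

section LogarithmicDerivative

variable {C F : Type*} [Field C] [Field F] [Algebra C F] {D v d : Derivation C F F}
  {L K : IntermediateField C F} {R : Subalgebra C F}

theorem hasFiniteIterates_of_mem_ringCompositum (hL : ∀ y ∈ L, d y ∈ L)
    (hK : K ≤ constantField d) {y : F} (hy : y ∈ ringCompositum L K) : HasFiniteIterates d L y := by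
  refine ringCompositum_induction (fun l hl k hk ↦ ?_) ?_ hy
  · have hiter (n) : d^[n] l ∈ L ∧ d^[n] (l * k) = d^[n] l * k := by
      induction n with
      | zero => exact ⟨hl, rfl⟩
      | succ n ih =>
        simp only [Function.iterate_succ_apply', ih.2]
        exact ⟨hL _ ih.1, by simp [mem_constantField.1 (hK hk), mul_comm]⟩
    refine ⟨_, Submodule.fg_span_singleton k, fun n ↦ ?_⟩
    rw [(hiter n).2]
    exact Submodule.smul_mem _ (⟨_, (hiter n).1⟩ : L) (Submodule.mem_span_singleton_self k)
  · exact fun y z ↦ HasFiniteIterates.add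

theorem div_mem_constantField_iff {p q : F} (hq : q ≠ 0) :
    p / q ∈ constantField d ↔ q * d p = p * d q := by
  rw [mem_constantField, Derivation.leibniz_div]
  simp [hq, sub_eq_zero]

theorem exists_div_eq_of_mem_constantField [UniqueFactorizationMonoid R]
    (hD : ∀ y ∈ R, D y ∈ R) {a b : F} (ha : a ∈ R) (hb : b ∈ R) (hab : a / b ∈ constantField D) :
    ∃ p q μ : R, q ≠ 0 ∧ a / b = p / q ∧ D p = μ * p ∧ D q = μ * q := by
  obtain ⟨p, q, hq0, hpq, hab'⟩ := exists_isRelPrime_div ha hb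
  have hq0' : (q : F) ≠ 0 := by simpa using hq0
  have hwronskian := (div_mem_constantField_iff hq0').1 (hab' ▸ hab)
  obtain ⟨μ, hμ⟩ : IsDarboux (restrictDerivation D R hD) q :=
    isDarboux_of_isRelPrime_of_mul_eq hpq.symm (Subtype.ext hwronskian.symm)
  have hDq : D q = μ * q := (congr(($hμ : F))).trans (mul_comm (q : F) μ)
  refine ⟨p, q, μ, hq0, hab', mul_left_cancel₀ hq0' ?_, hDq⟩
  rw [hwronskian, hDq]
  ring

theorem exists_isDarboux_mul_mem [UniqueFactorizationMonoid R] (hv : ∀ y ∈ R, v y ∈ R)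
    (hL : L ≤ constantField v) (hLR : ∀ y ∈ L, ∃ a ∈ R, ∃ b ∈ R, y = a / b)
    (hKR : K.toSubalgebra ≤ R) {y : F} (hy : y ∈ ringCompositum L K) :
    ∃ b : R, b ≠ 0 ∧ IsDarboux (restrictDerivation v R hv) b ∧ b * y ∈ R := by
  refine ringCompositum_induction (fun l hl k hk ↦ ?_) ?_ hy
  · obtain ⟨a, ha, b, hb, rfl⟩ := hLR l hl
    obtain ⟨p, q, hq0, hpq, hab⟩ := exists_isRelPrime_div ha hb
    have hq0' : (q : F) ≠ 0 := by simpa using hq0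
    have hwronskian := (div_mem_constantField_iff hq0').1 (hab ▸ hL hl)
    refine ⟨q, hq0, isDarboux_of_isRelPrime_of_mul_eq hpq.symm (Subtype.ext hwronskian.symm), ?_⟩
    rw [hab, ← mul_assoc, mul_div_cancel₀ _ hq0']
    exact mul_mem p.2 (hKR hk)
  · rintro y z ⟨b, hb0, hb, hby⟩ ⟨c, hc0, hc, hcz⟩
    refine ⟨b * c, mul_ne_zero hb0 hc0, hb.mul hc, ?_⟩
    convert! add_mem (mul_mem c.2 hby) (mul_mem b.2 hcz) using 1
    push_cast
    ring

theorem logDeriv_mem_of_mul_mem [CharZero C] [UniqueFactorizationMonoid R]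
    {hD : ∀ y ∈ R, D y ∈ R} {hv : ∀ y ∈ R, v y ∈ R}
    (hDv : ∀ p, Prime p → IsDarboux (restrictDerivation D R hD) p →
      IsDarboux (restrictDerivation v R hv) p)
    {a b μ : F} (ha : a ∈ R) (hb : b ∈ R) (hμ : D (a / b) = μ * (a / b)) {s : R} (hs0 : s ≠ 0)
    (hs : IsDarboux (restrictDerivation v R hv) s) (hsμ : s * μ ∈ R) :
    v (a / b) / (a / b) ∈ R := by
  obtain ⟨p, q, hq0, hpq, hab⟩ := exists_isRelPrime_div ha hb
  rw [hab] at hμ ⊢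
  obtain rfl | hp0 := eq_or_ne p 0
  · simp
  have hp0' : (p : F) ≠ 0 := by simpa using hp0
  have hq0' : (q : F) ≠ 0 := by simpa using hq0
  set DR := restrictDerivation D R hD
  have hwronskian : s * (q * DR p - p * DR q) = ⟨_, hsμ⟩ * p * q := by
    refine Subtype.ext ?_
    rw [Derivation.leibniz_div] at hμ
    simp only [smul_eq_mul] at hμ
    field_simp at hμ
    push_cast [DR, coe_restrictDerivation]
    linear_combination s * hμ
  have hp : p ∣ s * DR p :=
    hpq.dvd_of_dvd_mul_left ⟨⟨_, hsμ⟩ * q + s * DR q, by linear_combination hwronskian⟩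
  have hq : q ∣ s * DR q :=
    hpq.symm.dvd_of_dvd_mul_left ⟨s * DR p - ⟨_, hsμ⟩ * p, by linear_combination -hwronskian⟩
  obtain ⟨r, hr⟩ := isDarboux_of_dvd_mul hs hs0 hDv hp0 hp
  obtain ⟨t, ht⟩ := isDarboux_of_dvd_mul hs hs0 hDv hq0 hq
  replace hr : v p = p * r := congr(($hr : F))
  replace ht : v q = q * t := congr(($ht : F))
  convert! sub_mem r.2 t.2 using 1
  rw [Derivation.leibniz_div, hr, ht]
  simp only [smul_eq_mul]
  field_simp

end LogarithmicDerivative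

section ExtensionOfDerivations

theorem exists_derivation_algebraMap_eq {R S T V : Type*} [CommRing R] [CommRing S] [CommRing T]
    [Algebra R S] [Algebra R T] [Algebra S T] [IsScalarTower R S T] [Algebra.FormallyEtale S T]
    [AddCommGroup V] [Module R V] [Module S V] [Module T V] [IsScalarTower R T V]
    [IsScalarTower S T V]
    (d : Derivation R S V) : ∃ d' : Derivation R T V, ∀ s, d' (algebraMap S T s) = d s := by
  have : IsScalarTower R S V := .to₁₂₄ R S T V
  refine ⟨((d.liftKaehlerDifferential.liftBaseChange T).comp
    (KaehlerDifferential.tensorKaehlerEquivOfFormallyEtale R S T).symm.toLinearMap).compDer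
      (KaehlerDifferential.D R T), fun s ↦ ?_⟩
  simp [KaehlerDifferential.tensorKaehlerEquivOfFormallyEtale_symm_D_algebraMap]

theorem exists_derivation_apply_eq {k F V ι : Type*} [Field k] [Field F] [Algebra k F]
    [AddCommGroup V] [Module k V] [Module F V] [IsScalarTower k F V] {x : ι → F}
    (hx : AlgebraicIndependent k x) (hgen : IntermediateField.adjoin k (Set.range x) = ⊤)
    (f : ι → V) : ∃ v : Derivation k F V, ∀ i, v (x i) = f i := by
  let P := MvPolynomial ι k
  let : Algebra P F := (MvPolynomial.aeval x).toAlgebra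
  let : Module P V := Module.compHom V (algebraMap P F)
  have : IsScalarTower P F V := ⟨fun p y z ↦ mul_smul (algebraMap P F p) y z⟩
  have : IsScalarTower k P F := .of_algHom (MvPolynomial.aeval x)
  have : IsScalarTower k P V := .to₁₂₄ k P F V
  have : FaithfulSMul P F := (faithfulSMul_iff_algebraMap_injective P F).2 hx
  have : IsFractionRing P F := by
    refine IsFractionRing.of_field P F fun y ↦ ?_
    obtain ⟨r, s, rfl⟩ := (IntermediateField.mem_adjoin_range_iff k x y).1 (hgen ▸ trivial)
    exact ⟨r, s, rfl⟩
  have : Algebra.FormallyEtale P F := .of_isLocalization (nonZeroDivisors P)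
  obtain ⟨v, hv⟩ := exists_derivation_algebraMap_eq (T := F) (MvPolynomial.mkDerivation k f)
  refine ⟨v, fun i ↦ ?_⟩
  rw [← MvPolynomial.mkDerivation_X k f i, ← hv]
  exact congrArg v (MvPolynomial.aeval_X x i).symm

end ExtensionOfDerivations

section RelativeDerivation

variable {C F : Type*} [Field C] [Field F] [Algebra C F] {D v : Derivation C F F}
  {K : IntermediateField C F}

/-- With `M` the field of constants of `v`: the field `F` is generated by the linearly disjoint
subfields `M` and `K`, both stable under `D`, and `v` is the derivation of `F` that agrees with `D`
on `K` and vanishes on `M`. -/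
structure IsRelativeDerivation (D v : Derivation C F F) (K : IntermediateField C F) : Prop where
  apply_mem_constantField : ∀ y ∈ constantField v, D y ∈ constantField v
  apply_mem : ∀ y ∈ K, D y ∈ K
  apply_eq : ∀ y ∈ K, v y = D y
  linearDisjoint : (constantField v).LinearDisjoint K
  sup_eq_top : constantField v ⊔ K = ⊤

namespace IsRelativeDerivation

theorem le_constantField_sub (h : IsRelativeDerivation D v K) : K ≤ constantField (v - D) :=
  fun y hy ↦ by simp [mem_constantField, h.apply_eq y hy]

theorem apply_comm (h : IsRelativeDerivation D v K) (y : F) : D (v y) = v (D y) := by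
  have hle : constantField v ⊔ K ≤ constantField ⁅D, v⁆ := by
    refine sup_le (fun m hm ↦ ?_) (fun k hk ↦ ?_)
    · simp [mem_constantField, Derivation.commutator_apply, mem_constantField.1 hm,
        mem_constantField.1 (h.apply_mem_constantField m hm)]
    · simp [mem_constantField, Derivation.commutator_apply, h.apply_eq k hk,
        h.apply_eq _ (h.apply_mem k hk)]
  rw [h.sup_eq_top] at hle
  exact sub_eq_zero.1 ((Derivation.commutator_apply y).symm.trans (hle trivial))

theorem apply_mem_of_mem (h : IsRelativeDerivation D v K) {y : F} (hy : y ∈ K) : v y ∈ K :=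
  h.apply_eq y hy ▸ h.apply_mem y hy

theorem apply_mem_constantField_left (h : IsRelativeDerivation D v K) {y : F}
    (hy : y ∈ constantField D) : v y ∈ constantField D := by
  rw [mem_constantField, h.apply_comm, mem_constantField.1 hy, map_zero]

theorem sub_apply_mem_constantField (h : IsRelativeDerivation D v K) {y : F}
    (hy : y ∈ constantField v) : (v - D) y ∈ constantField v := by
  simpa [mem_constantField.1 hy] using h.apply_mem_constantField y hy

theorem hasElementarySolution_of_fg [IsAlgClosed C] (h : IsRelativeDerivation D v K) (κ : F)
    {W : Submodule (constantField v) F} (hWfg : W.FG) (hW : ∀ y ∈ W, v y - κ * y ∈ W) {p q : F}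
    (hp : p ∈ W) (hq : q ∈ W) (hpq : p * v q - q * v p ≠ 0) : HasElementarySolution D K := by
  obtain ⟨z, hzK, hz, hvz⟩ := _root_.hasElementarySolution_of_fg
    (fun y ↦ h.apply_mem_of_mem) le_rfl h.linearDisjoint h.sup_eq_top κ hWfg hW
    hp hq hpq
  exact ⟨z, hzK, hz, h.apply_eq z hzK ▸ hvz⟩

theorem apply_sub_mul_mem_iterSpan (h : IsRelativeDerivation D v K) {κ : F}
    (hκ : (v - D) κ ∈ constantField v) {S : Set F} (hS : ∀ s ∈ S, D s = κ * s) {y : F}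
    (hy : y ∈ iterSpan (v - D) (constantField v) S) :
    v y - κ * y ∈ iterSpan (v - D) (constantField v) S := by
  have hstable {z} := apply_mem_iterSpan (S := S) (y := z) fun m ↦ h.sub_apply_mem_constantField
  have hiter (s) (hs : s ∈ S) (n : ℕ) : v ((v - D)^[n] s) - κ * (v - D)^[n] s ∈
      iterSpan (v - D) (constantField v) S := by
    induction n with
    | zero => simpa [hS s hs] using iterate_mem_iterSpan (d := v - D) hs 1
    | succ n ih =>
      rw [Function.iterate_succ_apply']
      set z := (v - D)^[n] s
      have hz : v ((v - D) z) - κ * (v - D) z = (v - D) (v z - κ * z) + (v - D) κ * z := by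
        simp [h.apply_comm]
        ring
      exact hz ▸ add_mem (hstable ih)
        (Submodule.smul_mem _ (⟨_, hκ⟩ : constantField v) (iterate_mem_iterSpan hs n))
  let T := constantLinearMap v - LinearMap.mulLeft (constantField v) κ
  suffices hT : iterSpan (v - D) (constantField v) S ≤ (iterSpan _ _ S).comap T from hT hy
  refine Submodule.span_le.2 (Set.iUnion_subset fun n ↦ ?_)
  rintro _ ⟨s, hs, rfl⟩
  exact hiter s hs n

theorem hasElementarySolution_of_semiinvariants [IsAlgClosed C] (h : IsRelativeDerivation D v K)
    {p q κ : F} (hκ : (v - D) κ ∈ constantField v) (hp : p ∈ ringCompositum (constantField v) K)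
    (hq : q ∈ ringCompositum (constantField v) K) (hDp : D p = κ * p) (hDq : D q = κ * q)
    (hpq : p * v q - q * v p ≠ 0) : HasElementarySolution D K := by
  have hfin {y} (hy : y ∈ ringCompositum (constantField v) K) :
      HasFiniteIterates (v - D) (constantField v) y :=
    hasFiniteIterates_of_mem_ringCompositum (fun m ↦ h.sub_apply_mem_constantField)
      h.le_constantField_sub hy
  refine h.hasElementarySolution_of_fg κ (W := iterSpan (v - D) (constantField v) {p, q})
    (iterSpan_fg (by simp) ?_) (fun y ↦ h.apply_sub_mul_mem_iterSpan hκ ?_)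
    (iterate_mem_iterSpan (.inl rfl) 0) (iterate_mem_iterSpan (.inr rfl) 0) hpq
  · simp [hfin hp, hfin hq]
  · simp [hDp, hDq]

theorem iterate_sub_sum_mul (h : IsRelativeDerivation D v K) {n : ℕ} {a b : Fin n → F}
    (ha : ∀ i, a i ∈ constantField D) (hb : ∀ i, b i ∈ K) (j : ℕ) :
    (v - D)^[j] (∑ i, a i * b i) = ∑ i, v^[j] (a i) * b i := by
  induction j with
  | zero => rfl
  | succ j ih =>
    have hDa (i) : D (v^[j] (a i)) = 0 := by
      rw [Function.Commute.iterate_right (f := D) h.apply_comm j (a i), mem_constantField.1 (ha i),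
        iterate_map_zero]
    rw [Function.iterate_succ_apply', ih, map_sum]
    refine Finset.sum_congr rfl fun i _ ↦ ?_
    rw [Derivation.leibniz, mem_constantField.1 (h.le_constantField_sub (hb i)),
      Function.iterate_succ_apply']
    simp [hDa, mul_comm]

theorem hasElementarySolution_of_mem_ringCompositum [IsAlgClosed C]
    (h : IsRelativeDerivation D v K) {τ : F} (hτM : τ ∈ ringCompositum (constantField v) K)
    (hτE : τ ∈ ringCompositum (constantField D) K) (hτ : (v - D) τ ≠ 0) :
    HasElementarySolution D K := by
  obtain ⟨n, a, b, hb, rfl⟩ := exists_sum_mul_eq_of_mem_ringCompositum hτE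
  have hiter := h.iterate_sub_sum_mul (fun i ↦ (a i).2) (fun i ↦ (b i).2)
  obtain ⟨i, hi⟩ : ∃ i, v (a i) ≠ 0 := by
    by_contra! hva
    exact hτ ((hiter 1).trans (by simp [hva]))
  obtain ⟨U, hUfg, hU⟩ := hasFiniteIterates_of_mem_ringCompositum
    (fun m ↦ h.sub_apply_mem_constantField) h.le_constantField_sub hτM
  have hfin (i) : HasFiniteIterates v (constantField v) (a i : F) :=
    hasFiniteIterates_of_sum_mul_mem (h.linearDisjoint.linearIndependent_right hb) hUfg
      (fun j ↦ hiter j ▸ hU j) i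
  let S : Set F := insert 1 (Set.range fun i ↦ (a i : F))
  refine h.hasElementarySolution_of_fg 0 (W := iterSpan v (constantField v) S) (p := 1) (q := a i)
    (iterSpan_fg ((Set.finite_range _).insert 1) ?_) (fun y hy ↦ ?_)
    (iterate_mem_iterSpan (Set.mem_insert 1 _) 0)
    (iterate_mem_iterSpan (Set.mem_insert_of_mem 1 (Set.mem_range_self i)) 0) (by simpa using hi)
  · exact Set.forall_mem_insert.2
      ⟨hasFiniteIterates_of_mem_constantField (one_mem _), Set.forall_mem_range.2 hfin⟩
  · rw [zero_mul, sub_zero]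
    exact apply_mem_iterSpan (fun m ↦ apply_mem_of_mem_constantField) hy

theorem isDarboux_of_prime [CharZero C] (h : IsRelativeDerivation D v K)
    {hD : ∀ y ∈ ringCompositum (constantField D) K, D y ∈ ringCompositum (constantField D) K}
    {hv : ∀ y ∈ ringCompositum (constantField D) K, v y ∈ ringCompositum (constantField D) K}
    {p : ringCompositum (constantField D) K} (hp : Prime p)
    (hpD : IsDarboux (restrictDerivation D _ hD) p) :
    IsDarboux (restrictDerivation v _ hv) p := by
  have hδ (y) (hy : y ∈ ringCompositum (constantField D) K) :
      (v - D) y ∈ ringCompositum (constantField D) K := sub_mem (hv y hy) (hD y hy)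
  have hδE (e) (he : e ∈ constantField D) : (v - D) e ∈ constantField D :=
    sub_mem (h.apply_mem_constantField_left he) (apply_mem_of_mem_constantField he)
  have hpδ : IsDarboux (restrictDerivation (v - D) _ hδ) p :=
    isDarboux_of_commute (fun y ↦ by simp [h.apply_comm]) hD hδ
      (fun e ↦ left_mem_ringCompositum) (fun y ↦
        hasFiniteIterates_of_mem_ringCompositum hδE h.le_constantField_sub) hp hpD
  have hsum : restrictDerivation v _ hv p =
      restrictDerivation (v - D) _ hδ p + restrictDerivation D _ hD p :=
    Subtype.ext (sub_add_cancel (v p) (D p)).symm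
  exact (dvd_add hpδ hpD).trans hsum.symm.dvd

theorem logDeriv_mem_ringCompositum [CharZero C] (h : IsRelativeDerivation D v K)
    [UniqueFactorizationMonoid (ringCompositum (constantField D) K)] {y μ : F}
    (hy : y ∈ constantField D ⊔ K)
    (hμ : μ ∈ ringCompositum (constantField v ⊓ (constantField D ⊔ K)) K) (hDy : D y = μ * y) :
    v y / y ∈ ringCompositum (constantField D) K := by
  have hD (y) (hy : y ∈ ringCompositum (constantField D) K) :
      D y ∈ ringCompositum (constantField D) K :=
    apply_mem_ringCompositum (fun e ↦ apply_mem_of_mem_constantField) h.apply_mem hy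
  have hv (y) (hy : y ∈ ringCompositum (constantField D) K) :
      v y ∈ ringCompositum (constantField D) K :=
    apply_mem_ringCompositum (fun e ↦ h.apply_mem_constantField_left)
      (fun k ↦ h.apply_mem_of_mem) hy
  obtain ⟨s, hs0, hs, hsμ⟩ := exists_isDarboux_mul_mem hv inf_le_left
    (fun l hl ↦ exists_div_of_mem_sup hl.2) (fun k ↦ right_mem_ringCompositum) hμ
  obtain ⟨a, ha, b, hb, rfl⟩ := exists_div_of_mem_sup hy
  exact logDeriv_mem_of_mul_mem (hD := hD) (fun p ↦ h.isDarboux_of_prime) ha hb hDy hs0 hs hsμ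

theorem exists_semiinvariants (h : IsRelativeDerivation D v K)
    [UniqueFactorizationMonoid
      (ringCompositum (constantField v ⊓ (constantField D ⊔ K)) K)] {w : F}
    (hw : w ∈ constantField D) :
    ∃ p q μ : ringCompositum (constantField v ⊓ (constantField D ⊔ K)) K,
      q ≠ 0 ∧ w = p / q ∧ D p = μ * p ∧ D q = μ * q := by
  obtain ⟨a, ha, b, hb, rfl⟩ := exists_div_mem_ringCompositum_inf
    (h.linearDisjoint.of_le_left inf_le_left) h.sup_eq_top
    (fun y ↦ apply_mem_sup (fun e ↦ h.apply_mem_constantField_left)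
      (fun k ↦ h.apply_mem_of_mem)) le_sup_right
    (le_sup_left (a := constantField D) (b := K) hw)
  refine exists_div_eq_of_mem_constantField (fun y ↦ apply_mem_ringCompositum (fun m hm ↦ ?_)
    h.apply_mem) ha hb hw
  exact ⟨h.apply_mem_constantField m hm.1, apply_mem_sup
    (fun e ↦ apply_mem_of_mem_constantField) h.apply_mem hm.2⟩

theorem hasElementarySolution_of_mem_constantField [CharZero C] [IsAlgClosed C]
    (h : IsRelativeDerivation D v K)
    [UniqueFactorizationMonoid (ringCompositum (constantField D) K)]
    [UniqueFactorizationMonoid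
      (ringCompositum (constantField v ⊓ (constantField D ⊔ K)) K)] {w : F}
    (hwD : w ∈ constantField D) (hwv : w ∉ constantField v) : HasElementarySolution D K := by
  obtain ⟨p, q, μ, hq0, rfl, hDp, hDq⟩ := h.exists_semiinvariants hwD
  have hq0' : (q : F) ≠ 0 := by simpa using hq0
  have hM : ringCompositum (constantField v ⊓ (constantField D ⊔ K)) K ≤
      ringCompositum (constantField v) K := sup_le_sup_right (fun _ hm ↦ hm.1) _
  have hE : ringCompositum (constantField v ⊓ (constantField D ⊔ K)) K ≤
      (constantField D ⊔ K).toSubalgebra := sup_le (fun _ hm ↦ hm.2) (le_sup_right (b := K))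
  have hτE : v μ ∈ ringCompositum (constantField D) K := by
    rw [← Function.iterate_one v, ← derivation_iterate_logDeriv h.apply_comm hq0'
      (hDq.trans (mul_comm _ _)) 0]
    exact apply_mem_ringCompositum (fun e ↦ apply_mem_of_mem_constantField) h.apply_mem
      (h.logDeriv_mem_ringCompositum (hE q.2) μ.2 hDq)
  by_cases hτ : (v - D) (v μ) = 0
  · have hμ : (v - D) μ ∈ constantField v := by
      simpa [mem_constantField, h.apply_comm] using hτ
    refine h.hasElementarySolution_of_semiinvariants hμ (hM p.2) (hM q.2) hDp hDq fun hpq ↦ hwv ?_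
    exact (div_mem_constantField_iff hq0').2 (sub_eq_zero.1 hpq).symm
  · exact h.hasElementarySolution_of_mem_ringCompositum
      (apply_mem_ringCompositum (fun m ↦ apply_mem_of_mem_constantField)
        (fun k ↦ h.apply_mem_of_mem) (hM μ.2)) hτE hτ

end IsRelativeDerivation

end RelativeDerivation

section RationalFunctionField

variable {C F : Type*} [Field C] [Field F] [Algebra C F] {D v : Derivation C F F}
  {M : IntermediateField C F} {ι : Type*} {x : ι → F}

theorem apply_mem_adjoin {S : Set F}
    (hS : ∀ s ∈ S, D s ∈ IntermediateField.adjoin C S) {y : F}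
    (hy : y ∈ IntermediateField.adjoin C S) : D y ∈ IntermediateField.adjoin C S := by
  induction hy using IntermediateField.adjoin_induction with
  | mem s hs => exact hS s hs
  | algebraMap c => simp
  | add y z _ _ hy hz => exact map_add D y z ▸ add_mem hy hz
  | inv y hymem hy =>
    rw [Derivation.leibniz_inv]
    exact mul_mem (neg_mem (pow_mem (inv_mem hymem) 2)) hy
  | mul y z hymem hzmem hy hz =>
    rw [Derivation.leibniz]
    exact add_mem (mul_mem hymem hz) (mul_mem hzmem hy)

theorem exists_isRelativeDerivation (hM : ∀ y ∈ M, D y ∈ M) (hx : AlgebraicIndependent M x)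
    (hgen : IntermediateField.adjoin M (Set.range x) = ⊤)
    (hDx : ∀ i, D (x i) ∈ IntermediateField.adjoin C (Set.range x))
    (hconst : IntermediateField.adjoin C (Set.range x) ⊓ constantField D = ⊥) :
    ∃ v : Derivation C F F, constantField v = M ∧
      IsRelativeDerivation D v (IntermediateField.adjoin C (Set.range x)) := by
  obtain ⟨v, hv⟩ := exists_derivation_apply_eq hx hgen fun i ↦ D (x i)
  set K := IntermediateField.adjoin C (Set.range x)
  let v' := v.restrictScalars C
  have hK : ∀ y ∈ K, D y ∈ K := fun y ↦ apply_mem_adjoin (Set.forall_mem_range.2 hDx)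
  have hle : K ≤ constantField (v' - D) := IntermediateField.adjoin_le_iff.2 <|
    Set.range_subset_iff.2 fun i ↦ sub_eq_zero.2 (hv i)
  have hvK (y) (hy : y ∈ K) : v' y = D y := sub_eq_zero.1 (hle hy)
  have hdisj : (constantField v').LinearDisjoint K :=
    linearDisjoint_constantField (fun y hy ↦ hvK y hy ▸ hK y hy) <| eq_bot_iff.2 fun y hy ↦
      hconst.le ⟨hy.1, (hvK y hy.1).symm.trans hy.2⟩
  have hsup : M ⊔ K = ⊤ := by
    rw [← IntermediateField.restrictScalars_adjoin_eq_sup, hgen,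
      IntermediateField.restrictScalars_top]
  have hvM : constantField v' = M :=
    constantField_eq_left (fun m hm ↦ v.map_algebraMap (⟨m, hm⟩ : M)) hdisj hsup
  exact ⟨v', hvM, by rwa [hvM], hK, hvK, hdisj, by rwa [hvM]⟩

theorem IsRelativeDerivation.hasElementarySolution_of_adjoin [CharZero C] [IsAlgClosed C]
    (h : IsRelativeDerivation D v (IntermediateField.adjoin C (Set.range x)))
    (hx : AlgebraicIndependent C x)
    (hconst : IntermediateField.adjoin C (Set.range x) ⊓ constantField D = ⊥) {w : F}
    (hwD : w ∈ constantField D) (hwv : w ∉ constantField v) :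
    HasElementarySolution D (IntermediateField.adjoin C (Set.range x)) := by
  have hufd {L : IntermediateField C F}
      (hL : L.LinearDisjoint (IntermediateField.adjoin C (Set.range x))) :=
    uniqueFactorizationMonoid_ringCompositum_adjoin (algebraicIndependent_of_linearDisjoint hL hx)
  have := hufd (linearDisjoint_constantField h.apply_mem hconst)
  have := hufd (h.linearDisjoint.of_le_left
    (inf_le_left (b := constantField D ⊔ IntermediateField.adjoin C (Set.range x))))
  exact h.hasElementarySolution_of_mem_constantField hwD hwv

theorem hasElementarySolution_adjoin [CharZero C] [IsAlgClosed C] (hM : ∀ y ∈ M, D y ∈ M)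
    (hx : AlgebraicIndependent M x) (hgen : IntermediateField.adjoin M (Set.range x) = ⊤)
    (hDx : ∀ i, D (x i) ∈ IntermediateField.adjoin C (Set.range x)) {w : F}
    (hwD : w ∈ constantField D) (hwM : w ∉ M) :
    HasElementarySolution D (IntermediateField.adjoin C (Set.range x)) := by
  by_cases hconst : IntermediateField.adjoin C (Set.range x) ⊓ constantField D = ⊥
  · obtain ⟨v, rfl, h⟩ := exists_isRelativeDerivation hM hx hgen hDx hconst
    exact h.hasElementarySolution_of_adjoin (hx.restrictScalars (algebraMap C _).injective)
      hconst hwD hwM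
  · obtain ⟨z, hz, hz'⟩ := SetLike.not_le_iff_exists.1 fun hle ↦ hconst (eq_bot_iff.2 hle)
    exact ⟨z, hz.1, hz', .inl hz.2⟩

end RationalFunctionField

theorem stmt12_general {F : Type*} [Field F] [CharZero F] (D : Derivation ℤ F F)
    (C M : Subfield F) (hCM : C ≤ M)
    (hCalg : IsAlgClosed ↥C)
    (hCconst : ∀ c ∈ C, D c = 0)
    (hMdiff : ∀ x ∈ M, D x ∈ M)
    {ι : Type*} (x : ι → F)
    (hxind : AlgebraicIndependent ↥M x)
    (hgen : Subfield.closure (↑M ∪ Set.range x) = (⊤ : Subfield F))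
    (hf : ∀ i, D (x i) ∈ Subfield.closure (↑C ∪ Set.range x))
    (hnewconst : ∃ w : F, D w = 0 ∧ w ∉ M) :
    ∃ z ∈ Subfield.closure (↑C ∪ Set.range x), z ∉ C ∧
      (D z = 0 ∨ D z = 1 ∨ ∃ c ∈ C, c ≠ 0 ∧ D z = c * z) := by
  let D' : Derivation C F F := .mk'
    { D with map_smul' := fun c y ↦ by simp [Subfield.smul_def, hCconst] } D.leibniz
  have hadjoin (k : Subfield F) :
      (IntermediateField.adjoin k (Set.range x)).toSubfield =
        Subfield.closure (k ∪ Set.range x) := by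
    have hk : Set.range (algebraMap k F) = k := Subtype.range_coe
    rw [IntermediateField.adjoin_toSubfield, hk]
  rw [← hadjoin] at hgen hf ⊢
  obtain ⟨w, hwD, hwM⟩ := hnewconst
  obtain ⟨z, hzK, hzC, hz⟩ := hasElementarySolution_adjoin (D := D')
    (M := Subfield.extendScalars hCM) hMdiff hxind
    (IntermediateField.toSubfield_injective hgen) hf hwD hwM
  refine ⟨z, hzK, fun hz ↦ hzC (IntermediateField.algebraMap_mem ⊥ (⟨z, hz⟩ : C)),
    hz.imp_right (Or.imp_right ?_)⟩
  rintro ⟨c, hc0, hc⟩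
  exact ⟨c, c.2, by simpa using hc0, hc⟩

/-- Let `M` be a differential field extension of an algebraically closed
field of constants `C`, and `F = M(x₁,…,xₙ)` with `xᵢ' = fᵢ ∈ C(x₁,…,xₙ)`. If `F` contains
a constant not in `M`, then there is `z ∈ C(x₁,…,xₙ) \ C` with `z' = 0`, `z' = 1`, or
`z' = c·z` for some nonzero `c ∈ C`. -/
theorem stmt12 {F : Type u} [Field F] [CharZero F] (D : Derivation ℤ F F)
    (C M : Subfield F) (hCM : C ≤ M)
    (hCalg : IsAlgClosed ↥C)
    (hCconst : ∀ c ∈ C, D c = 0)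
    (hMdiff : ∀ x ∈ M, D x ∈ M)
    (n : ℕ) (x : Fin n → F)
    (hxind : AlgebraicIndependent ↥M x)
    (hgen : Subfield.closure (↑M ∪ Set.range x) = (⊤ : Subfield F))
    (hf : ∀ i, D (x i) ∈ Subfield.closure (↑C ∪ Set.range x))
    (hnewconst : ∃ w : F, D w = 0 ∧ w ∉ M) :
    ∃ z ∈ Subfield.closure (↑C ∪ Set.range x), z ∉ C ∧
      (D z = 0 ∨ D z = 1 ∨ ∃ c ∈ C, c ≠ 0 ∧ D z = c * z) :=
  stmt12_general D C M hCM hCalg hCconst hMdiff x hxind hgen hf hnewconst
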